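/- arXiv:2312.15531 — 3 statements merged into one kernel-verified Lean document; each statement's English description precedes it below -/
import Mathlib

section
/- Let t0 > 0, and let b : [t0,∞) → ℝ be a measurable function such that m/t ≤ b(t) ≤ M/t for every t ≥ t0, where M ≥ m > 0 are real constants. Then for every λ > 0, every solution u of the damped oscillator equation u'' + b(t)u' + λ²u = 0 satisfies u'(t)² + λ²u(t)² ≤ exp(m(M+8)/(λ·t0))·(u'(t0)² + λ²u(t0)²)·(t0/t)^m for every t ≥ t0. -/
open Real Set Filter MeasureTheory intervalIntegral

/-- A solution of the damped oscillator equation `u'' + b(t) u' + λ² u = 0` on `[t0, ∞)`: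
a `C¹` function `u` (with derivative `u'`) whose derivative is locally absolutely continuous
(i.e. it is the integral of a locally integrable function `w`) and which satisfies the
equation almost everywhere on `[t0, ∞)`. -/
def IsDampedSol (t0 : ℝ) (b : ℝ → ℝ) (lam : ℝ) (u u' : ℝ → ℝ) : Prop :=
  (∀ t ∈ Ici t0, HasDerivAt u (u' t) t) ∧
  ContinuousOn u' (Ici t0) ∧
  ∃ w : ℝ → ℝ,
    (∀ T ≥ t0, IntervalIntegrable w volume t0 T) ∧
    (∀ t ∈ Ici t0, u' t = u' t0 + ∫ s in t0..t, w s) ∧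
    (∀ᵐ t ∂(volume.restrict (Ici t0)), w t + b t * u' t + lam ^ 2 * u t = 0)

/-!
The energy `E = u'² + λ² u²` has derivative `-2 b u'²`, which vanishes with `u'` and so does not
control `E` pointwise. Adding `(m / t) u u'` spreads the dissipation equally over both parts
of the energy: the corrected energy `F` satisfies `F' ≤ -(m / t) F + O(t⁻²) F`, so `t ^ m * F` grows
by a bounded factor at most. The correction is harmless once `m ≤ λ t`; on the remaining initial
interval the monotonicity of `E` is enough, since there `(t / t0) ^ m ≤ exp (m (t / t0 - 1))`.
-/

section AbsolutelyContinuous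

lemma absolutelyContinuousOnInterval_congr {X : Type*} [PseudoMetricSpace X] {f g : ℝ → X}
    {a b : ℝ} (hf : AbsolutelyContinuousOnInterval f a b) (hfg : EqOn f g (uIcc a b)) :
    AbsolutelyContinuousOnInterval g a b := by
  rw [absolutelyContinuousOnInterval_iff] at hf ⊢
  intro ε hε
  obtain ⟨δ, hδ, hsum⟩ := hf ε hε
  refine ⟨δ, hδ, fun I hI hlen ↦ (Finset.sum_congr rfl fun i hi ↦ ?_).trans_lt (hsum I hI hlen)⟩
  rw [hfg (hI.1 i hi).1, hfg (hI.1 i hi).2]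

lemma absolutelyContinuousOnInterval_of_eq_add_integral {g w : ℝ → ℝ} {a b c : ℝ}
    (hw : IntervalIntegrable w volume a b) (hg : ∀ t ∈ uIcc a b, g t = c + ∫ s in a..t, w s) :
    AbsolutelyContinuousOnInterval g a b := by
  have hconst : AbsolutelyContinuousOnInterval (fun _ : ℝ ↦ c) a b :=
    (contDiffOn_const (n := 1)).absolutelyContinuousOnInterval
  exact absolutelyContinuousOnInterval_congr
    (hconst.add (hw.absolutelyContinuousOnInterval_intervalIntegral left_mem_uIcc))
    fun t ht ↦ (hg t ht).symm

lemma ae_hasDerivAt_of_eq_add_integral {E : Type*} [NormedAddCommGroup E] [NormedSpace ℝ E]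
    [CompleteSpace E] {g w : ℝ → E} {a : ℝ} {c : E}
    (hw : ∀ T ≥ a, IntervalIntegrable w volume a T)
    (hg : ∀ t ∈ Ici a, g t = c + ∫ s in a..t, w s) :
    ∀ᵐ t ∂volume.restrict (Ici a), HasDerivAt g (w t) t := by
  have hderiv : ∀ᵐ t, ∀ n : ℕ, t ∈ uIcc a (a + n) →
      HasDerivAt (fun x ↦ ∫ s in a..x, w s) (w t) t :=
    ae_all_iff.2 fun n ↦ (hw (a + n) (by simp)).ae_hasDerivAt_integral.mono
      fun t ht htn ↦ ht htn a left_mem_uIcc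
  rw [← restrict_Ioi_eq_restrict_Ici, ae_restrict_iff' measurableSet_Ioi]
  filter_upwards [hderiv] with t ht hat
  obtain ⟨n, hn⟩ := exists_nat_ge (t - a)
  have htn : t ∈ uIcc a (a + n) := mem_uIcc_of_le (mem_Ioi.1 hat).le (by linarith)
  refine ((ht n htn).const_add c).congr_of_eventuallyEq ?_
  filter_upwards [Ioi_mem_nhds hat] with x hx using hg x (mem_Ioi.1 hx).le

lemma le_of_ae_deriv_nonpos {f : ℝ → ℝ} {a b : ℝ} (hab : a ≤ b)
    (hf : AbsolutelyContinuousOnInterval f a b)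
    (hderiv : ∀ᵐ t ∂volume.restrict (Ioc a b), deriv f t ≤ 0) : f b ≤ f a := by
  rw [← sub_nonpos, ← hf.integral_deriv_eq_sub, intervalIntegral.integral_of_le hab]
  exact integral_nonpos_of_ae hderiv

lemma exp_mul_le_of_ae_deriv_le {φ f : ℝ → ℝ} {a b : ℝ} (hab : a ≤ b)
    (hφ : ∀ t ∈ Icc a b, ContDiffAt ℝ 1 φ t) (hf : AbsolutelyContinuousOnInterval f a b)
    (hderiv : ∀ᵐ t ∂volume.restrict (Ioc a b), deriv φ t * f t + deriv f t ≤ 0) :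
    exp (φ b) * f b ≤ exp (φ a) * f a := by
  have hexp : AbsolutelyContinuousOnInterval (fun t ↦ exp (φ t)) a b :=
    ContDiffOn.absolutelyContinuousOnInterval fun t ht ↦
      (hφ t (uIcc_of_le hab ▸ ht)).exp.contDiffWithinAt
  refine le_of_ae_deriv_nonpos hab (hexp.mul hf) ?_
  have hfdiff := ae_restrict_of_ae (s := Ioc a b) hf.ae_differentiableAt
  filter_upwards [hderiv, hfdiff, ae_restrict_mem measurableSet_Ioc] with t ht hft hmem
  have htI : t ∈ Icc a b := Ioc_subset_Icc_self hmem
  have hφt : HasDerivAt φ (deriv φ t) t :=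
    ((hφ t htI).differentiableAt one_ne_zero).hasDerivAt
  have hft' : HasDerivAt f (deriv f t) t := (hft (uIcc_of_le hab ▸ htI)).hasDerivAt
  calc deriv ((fun t ↦ exp (φ t)) * f) t
      = exp (φ t) * deriv φ t * f t + exp (φ t) * deriv f t := (hφt.exp.mul hft').deriv
    _ = exp (φ t) * (deriv φ t * f t + deriv f t) := by ring
    _ ≤ 0 := mul_nonpos_of_nonneg_of_nonpos (exp_pos _).le ht

end AbsolutelyContinuous

section ElementaryInequalities

lemma rpow_le_exp_mul_rpow {a t m : ℝ} (ha : 0 < a) (ht : 0 ≤ t) (hm : 0 ≤ m) :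
    t ^ m ≤ exp (m * (t / a - 1)) * a ^ m := by
  have hratio : t / a ≤ exp (t / a - 1) := by linarith [add_one_le_exp (t / a - 1)]
  rw [← div_le_iff₀ (by positivity), ← div_rpow ht ha.le, mul_comm m, exp_mul]
  exact rpow_le_rpow (by positivity) hratio hm

lemma one_le_exp_two_mul_mul_one_sub {q : ℝ} (hq0 : 0 ≤ q) (hq : q ≤ 1 / 2) :
    1 ≤ exp (2 * q) * (1 - q) := by
  nlinarith [add_one_le_exp (2 * q)]

lemma early_exponent_le {t0 t lam m M : ℝ} (ht0 : 0 < t0) (hlam : 0 < lam) (hm : 0 ≤ m)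
    (hmM : m ≤ M) (ht : lam * t ≤ m) :
    m * (t / t0 - 1) ≤ m * (M + 5 / 2) / (lam * t0) := by
  rw [mul_div_assoc]
  gcongr
  calc t / t0 - 1 ≤ lam * t / (lam * t0) := by rw [mul_div_mul_left _ _ hlam.ne']; linarith
    _ ≤ (M + 5 / 2) / (lam * t0) := by gcongr; linarith

lemma late_exponent_add_early_exponent_le {t0 lam m M : ℝ} (ht0 : 0 < t0) (hlam : 0 < lam)
    (hmM : m ≤ M) (hmt0 : lam * t0 ≤ m) :
    m * (M - m + 5 / 2) / (lam * (m / lam)) + m * (m / lam / t0 - 1) ≤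
      m * (M + 5 / 2) / (lam * t0) := by
  have hm : 0 < m := (mul_pos hlam ht0).trans_le hmt0
  have hratio : 1 ≤ m / (lam * t0) := (one_le_div (by positivity)).2 hmt0
  calc m * (M - m + 5 / 2) / (lam * (m / lam)) + m * (m / lam / t0 - 1)
      = 1 * (M - m + 5 / 2) + m * (m / (lam * t0) - 1) := by field_simp
    _ ≤ m / (lam * t0) * (M - m + 5 / 2) + m * (m / (lam * t0)) := by
        gcongr
        linarith
    _ = m * (M + 5 / 2) / (lam * t0) := by ring

end ElementaryInequalities

/-- The energy `u'² + λ² u²` of the oscillator, as a function of the position `x = u` and the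
velocity `p = u'`. -/
noncomputable def oscillatorEnergy (lam x p : ℝ) : ℝ := p ^ 2 + lam ^ 2 * x ^ 2

/-- The energy with the cross term `(m / t) u u'` added: the Lyapunov function that decays like
`t ^ (-m)`, up to a bounded factor, when the damping is at least `m / t`. -/
noncomputable def correctedEnergy (lam m t x p : ℝ) : ℝ :=
  oscillatorEnergy lam x p + m / t * (x * p)

section Energy

variable {lam m t x p : ℝ}

lemma oscillatorEnergy_nonneg : 0 ≤ oscillatorEnergy lam x p := by
  unfold oscillatorEnergy
  positivity

lemma abs_mul_le_oscillatorEnergy_div (hlam : 0 < lam) :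
    |x * p| ≤ oscillatorEnergy lam x p / (2 * lam) := by
  have hamgm := two_mul_le_add_sq |p| (lam * |x|)
  rw [mul_pow, sq_abs, sq_abs] at hamgm
  rw [le_div_iff₀ (by positivity), abs_mul, oscillatorEnergy]
  linarith

lemma abs_correctedEnergy_sub_le (hlam : 0 < lam) (hm : 0 ≤ m) (ht : 0 < t) :
    |correctedEnergy lam m t x p - oscillatorEnergy lam x p| ≤
      m / (2 * lam * t) * oscillatorEnergy lam x p := by
  calc |correctedEnergy lam m t x p - oscillatorEnergy lam x p|
      = m / t * |x * p| := by
        rw [correctedEnergy, add_sub_cancel_left, abs_mul, abs_of_nonneg (by positivity)]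
    _ ≤ m / t * (oscillatorEnergy lam x p / (2 * lam)) := by
        gcongr
        exact abs_mul_le_oscillatorEnergy_div hlam
    _ = m / (2 * lam * t) * oscillatorEnergy lam x p := by field_simp

lemma correctedEnergy_le_exp_mul_oscillatorEnergy (hlam : 0 < lam) (hm : 0 ≤ m)
    (ht : 0 < t) :
    correctedEnergy lam m t x p ≤ exp (m / (2 * lam * t)) * oscillatorEnergy lam x p := by
  have hdiff := (abs_le.1 (abs_correctedEnergy_sub_le (x := x) (p := p) hlam hm ht)).2
  calc correctedEnergy lam m t x p
      ≤ (m / (2 * lam * t) + 1) * oscillatorEnergy lam x p := by linarith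
    _ ≤ exp (m / (2 * lam * t)) * oscillatorEnergy lam x p :=
        mul_le_mul_of_nonneg_right (add_one_le_exp _) oscillatorEnergy_nonneg

lemma one_sub_mul_oscillatorEnergy_le_correctedEnergy (hlam : 0 < lam) (hm : 0 ≤ m)
    (ht : 0 < t) :
    (1 - m / (2 * lam * t)) * oscillatorEnergy lam x p ≤ correctedEnergy lam m t x p := by
  linarith [(abs_le.1 (abs_correctedEnergy_sub_le (x := x) (p := p) hlam hm ht)).1]

lemma div_two_mul_mul_le_half (hlam : 0 < lam) (ht : 0 < t) (hmt : m ≤ lam * t) :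
    m / (2 * lam * t) ≤ 1 / 2 := by
  rw [div_le_div_iff₀ (by positivity) two_pos]
  linarith

lemma half_oscillatorEnergy_le_correctedEnergy (hlam : 0 < lam) (hm : 0 ≤ m) (ht : 0 < t)
    (hmt : m ≤ lam * t) :
    oscillatorEnergy lam x p / 2 ≤ correctedEnergy lam m t x p := by
  have hhalf : 1 / 2 ≤ 1 - m / (2 * lam * t) := by
    linarith [div_two_mul_mul_le_half hlam ht hmt]
  calc oscillatorEnergy lam x p / 2 = 1 / 2 * oscillatorEnergy lam x p := by ring
    _ ≤ (1 - m / (2 * lam * t)) * oscillatorEnergy lam x p :=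
        mul_le_mul_of_nonneg_right hhalf oscillatorEnergy_nonneg
    _ ≤ correctedEnergy lam m t x p :=
        one_sub_mul_oscillatorEnergy_le_correctedEnergy hlam hm ht

lemma correctedEnergy_nonneg (hlam : 0 < lam) (hm : 0 ≤ m) (ht : 0 < t) (hmt : m ≤ lam * t) :
    0 ≤ correctedEnergy lam m t x p :=
  (div_nonneg oscillatorEnergy_nonneg zero_le_two).trans
    (half_oscillatorEnergy_le_correctedEnergy hlam hm ht hmt)

lemma oscillatorEnergy_le_exp_mul_correctedEnergy (hlam : 0 < lam) (hm : 0 ≤ m) (ht : 0 < t)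
    (hmt : m ≤ lam * t) :
    oscillatorEnergy lam x p ≤ exp (m / (lam * t)) * correctedEnergy lam m t x p := by
  have hexp := one_le_exp_two_mul_mul_one_sub (q := m / (2 * lam * t)) (by positivity)
    (div_two_mul_mul_le_half hlam ht hmt)
  have hdouble : 2 * (m / (2 * lam * t)) = m / (lam * t) := by field_simp
  rw [hdouble] at hexp
  calc oscillatorEnergy lam x p
      ≤ exp (m / (lam * t)) * (1 - m / (2 * lam * t)) * oscillatorEnergy lam x p :=
        le_mul_of_one_le_left oscillatorEnergy_nonneg hexp
    _ = exp (m / (lam * t)) * ((1 - m / (2 * lam * t)) * oscillatorEnergy lam x p) :=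
        mul_assoc _ _ _
    _ ≤ exp (m / (lam * t)) * correctedEnergy lam m t x p := by
        gcongr
        exact one_sub_mul_oscillatorEnergy_le_correctedEnergy hlam hm ht

/-- The time derivative of `correctedEnergy` along a trajectory, for the value `β` of the damping
coefficient at time `t`. -/
noncomputable def correctedEnergyRate (lam m t β x p : ℝ) : ℝ :=
  -2 * β * p ^ 2 + m / t * (p ^ 2 - lam ^ 2 * x ^ 2 - (β + 1 / t) * (x * p))

lemma correctedEnergyRate_le {M β : ℝ} (hlam : 0 < lam) (hm : 0 ≤ m) (ht : 0 < t)
    (hmt : m ≤ lam * t) (hmβ : m / t ≤ β) (hβM : β ≤ M / t) :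
    (m / t - m * (1 + M - m) / lam / t ^ 2) * correctedEnergy lam m t x p +
      correctedEnergyRate lam m t β x p ≤ 0 := by
  rw [div_le_iff₀ ht] at hmβ
  rw [le_div_iff₀ ht] at hβM
  set F := correctedEnergy lam m t x p with hF
  have hcross : -(m * (1 + β * t - m) * (x * p)) ≤ m * (1 + M - m) / lam * F := by
    have hcoeff : 0 ≤ m * (1 + β * t - m) := mul_nonneg hm (by linarith)
    have hcoeffM : 0 ≤ 1 + M - m := by linarith
    calc -(m * (1 + β * t - m) * (x * p))
        ≤ m * (1 + β * t - m) * |x * p| := by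
          rw [← mul_neg]
          exact mul_le_mul_of_nonneg_left (neg_le_abs _) hcoeff
      _ ≤ m * (1 + M - m) * (oscillatorEnergy lam x p / (2 * lam)) := by
          gcongr
          exact abs_mul_le_oscillatorEnergy_div hlam
      _ = m * (1 + M - m) / lam * (oscillatorEnergy lam x p / 2) := by field_simp
      _ ≤ m * (1 + M - m) / lam * F := by
          gcongr
          exact half_oscillatorEnergy_le_correctedEnergy hlam hm ht hmt
  have hdissipation : 0 ≤ 2 * t * (β * t - m) * p ^ 2 := by
    have : 0 ≤ β * t - m := by linarith
    positivity
  calc (m / t - m * (1 + M - m) / lam / t ^ 2) * F + correctedEnergyRate lam m t β x p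
      = (-(2 * t * (β * t - m) * p ^ 2) - m * (1 + β * t - m) * (x * p)
          - m * (1 + M - m) / lam * F) / t ^ 2 := by
        rw [hF, correctedEnergy, correctedEnergyRate, oscillatorEnergy]
        field_simp
        ring
    _ ≤ 0 := div_nonpos_of_nonpos_of_nonneg (by linarith) (sq_nonneg t)

end Energy

namespace IsDampedSol

variable {t0 lam m M t : ℝ} {b u u' : ℝ → ℝ}

lemma mono (hu : IsDampedSol t0 b lam u u') {t1 : ℝ} (ht1 : t0 ≤ t1) :
    IsDampedSol t1 b lam u u' := by
  obtain ⟨hderiv, hcont, w, hw, hint, heq⟩ := hu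
  have hsub : Ici t1 ⊆ Ici t0 := Ici_subset_Ici.2 ht1
  refine ⟨fun t ht ↦ hderiv t (hsub ht), hcont.mono hsub, w,
    fun T hT ↦ (hw t1 ht1).symm.trans (hw T (ht1.trans hT)), fun t ht ↦ ?_,
    ae_restrict_of_ae_restrict_of_subset hsub heq⟩
  rw [hint t (hsub ht), hint t1 ht1,
    ← integral_add_adjacent_intervals (hw t1 ht1) ((hw t1 ht1).symm.trans (hw t (hsub ht))),
    add_assoc]

lemma absolutelyContinuousOnInterval (hu : IsDampedSol t0 b lam u u') (ht : t0 ≤ t) :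
    AbsolutelyContinuousOnInterval u t0 t := by
  have hsub : ∀ {r}, r ∈ Icc t0 t → uIcc t0 r ⊆ Ici t0 := fun hr ↦
    uIcc_of_le hr.1 ▸ Icc_subset_Ici_self
  have hint : ∀ r ∈ Icc t0 t, IntervalIntegrable u' volume t0 r := fun r hr ↦
    (hu.2.1.mono (hsub hr)).intervalIntegrable
  refine absolutelyContinuousOnInterval_of_eq_add_integral (c := u t0)
    (hint t (right_mem_Icc.2 ht)) fun r hr ↦ ?_
  rw [uIcc_of_le ht] at hr
  rw [integral_eq_sub_of_hasDerivAt (fun s hs ↦ hu.1 s (hsub hr hs)) (hint r hr)]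
  ring

lemma absolutelyContinuousOnInterval_velocity (hu : IsDampedSol t0 b lam u u') (ht : t0 ≤ t) :
    AbsolutelyContinuousOnInterval u' t0 t := by
  obtain ⟨-, -, w, hw, hint, -⟩ := hu
  exact absolutelyContinuousOnInterval_of_eq_add_integral (hw t ht) fun r hr ↦
    hint r (uIcc_of_le ht ▸ hr).1

lemma ae_hasDerivAt_velocity (hu : IsDampedSol t0 b lam u u') :
    ∀ᵐ t ∂volume.restrict (Ici t0), HasDerivAt u' (-(b t * u' t) - lam ^ 2 * u t) t := by
  obtain ⟨-, -, w, hw, hint, heq⟩ := hu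
  filter_upwards [ae_hasDerivAt_of_eq_add_integral hw hint, heq] with t ht heqt
  exact ht.congr_deriv (by linarith)

lemma absolutelyContinuousOnInterval_energy (hu : IsDampedSol t0 b lam u u') (ht : t0 ≤ t) :
    AbsolutelyContinuousOnInterval (fun s ↦ oscillatorEnergy lam (u s) (u' s)) t0 t := by
  have hpos := hu.absolutelyContinuousOnInterval ht
  have hvel := hu.absolutelyContinuousOnInterval_velocity ht
  refine absolutelyContinuousOnInterval_congr
    ((hvel.mul hvel).add ((hpos.mul hpos).const_mul (lam ^ 2))) fun s _ ↦ ?_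
  simp [oscillatorEnergy, sq]

lemma absolutelyContinuousOnInterval_correctedEnergy (hu : IsDampedSol t0 b lam u u')
    (ht0 : 0 < t0) (ht : t0 ≤ t) :
    AbsolutelyContinuousOnInterval (fun s ↦ correctedEnergy lam m s (u s) (u' s)) t0 t := by
  have hcoeff : AbsolutelyContinuousOnInterval (fun s ↦ m / s) t0 t := by
    refine ContDiffOn.absolutelyContinuousOnInterval
      (contDiffOn_const.div contDiffOn_id fun s hs ↦ ?_)
    exact (ht0.trans_le (uIcc_of_le ht ▸ hs).1).ne'
  exact (hu.absolutelyContinuousOnInterval_energy ht).add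
    (hcoeff.mul ((hu.absolutelyContinuousOnInterval ht).mul
      (hu.absolutelyContinuousOnInterval_velocity ht)))

lemma ae_hasDerivAt_energy (hu : IsDampedSol t0 b lam u u') :
    ∀ᵐ t ∂volume.restrict (Ici t0),
      HasDerivAt (fun s ↦ oscillatorEnergy lam (u s) (u' s)) (-2 * b t * u' t ^ 2) t := by
  filter_upwards [hu.ae_hasDerivAt_velocity, ae_restrict_mem measurableSet_Ici] with t hvel ht
  refine ((hvel.pow 2).add (((hu.1 t ht).pow 2).const_mul (lam ^ 2))).congr_deriv ?_
  ring

lemma ae_hasDerivAt_correctedEnergy (hu : IsDampedSol t0 b lam u u') (ht0 : 0 < t0) :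
    ∀ᵐ t ∂volume.restrict (Ici t0),
      HasDerivAt (fun s ↦ correctedEnergy lam m s (u s) (u' s))
        (correctedEnergyRate lam m t (b t) (u t) (u' t)) t := by
  filter_upwards [hu.ae_hasDerivAt_energy, hu.ae_hasDerivAt_velocity,
    ae_restrict_mem measurableSet_Ici] with t henergy hvel ht
  have ht_ne : t ≠ 0 := (ht0.trans_le ht).ne'
  have hcoeff : HasDerivAt (fun s ↦ m / s) (-m / t ^ 2) t := by
    simpa using (hasDerivAt_const t m).fun_div (hasDerivAt_id t) ht_ne
  refine (henergy.add (hcoeff.mul ((hu.1 t ht).mul hvel))).congr_deriv ?_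
  rw [correctedEnergyRate, Pi.mul_apply]
  field_simp
  ring

lemma energy_le (hu : IsDampedSol t0 b lam u u')
    (hb : ∀ᵐ t ∂volume.restrict (Ici t0), 0 ≤ b t) (ht : t0 ≤ t) :
    oscillatorEnergy lam (u t) (u' t) ≤ oscillatorEnergy lam (u t0) (u' t0) := by
  refine le_of_ae_deriv_nonpos ht (hu.absolutelyContinuousOnInterval_energy ht)
    (ae_restrict_of_ae_restrict_of_subset (Ioc_subset_Icc_self.trans Icc_subset_Ici_self) ?_)
  filter_upwards [hu.ae_hasDerivAt_energy, hb] with s hs hbs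
  rw [hs.deriv]
  nlinarith [mul_nonneg hbs (sq_nonneg (u' s))]

lemma rpow_mul_energy_le (hu : IsDampedSol t0 b lam u u') (ht0 : 0 < t0) (hm : 0 ≤ m)
    (hb : ∀ᵐ t ∂volume.restrict (Ici t0), 0 ≤ b t) (ht : t0 ≤ t) :
    t ^ m * oscillatorEnergy lam (u t) (u' t) ≤
      exp (m * (t / t0 - 1)) * (t0 ^ m * oscillatorEnergy lam (u t0) (u' t0)) := by
  have htpos : 0 ≤ t := ht0.le.trans ht
  rw [← mul_assoc]
  exact mul_le_mul (rpow_le_exp_mul_rpow ht0 htpos hm) (hu.energy_le hb ht)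
    oscillatorEnergy_nonneg (by positivity)

lemma rpow_mul_exp_mul_correctedEnergy_le (hu : IsDampedSol t0 b lam u u') (ht0 : 0 < t0)
    (hm : 0 ≤ m) (hlam : 0 < lam) (hmt0 : m ≤ lam * t0)
    (hb : ∀ᵐ t ∂volume.restrict (Ici t0), m / t ≤ b t ∧ b t ≤ M / t) (ht : t0 ≤ t) :
    t ^ m * exp (m * (1 + M - m) / lam / t) * correctedEnergy lam m t (u t) (u' t) ≤
      t0 ^ m * exp (m * (1 + M - m) / lam / t0) * correctedEnergy lam m t0 (u t0) (u' t0) := by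
  set K := m * (1 + M - m) / lam
  set φ : ℝ → ℝ := fun s ↦ m * log s + K / s
  have hexpφ : ∀ s, 0 < s → s ^ m * exp (K / s) = exp (φ s) := fun s hs ↦ by
    rw [exp_add, rpow_def_of_pos hs, mul_comm m]
  have hφ : ∀ s, 0 < s → ContDiffAt ℝ 1 φ s := fun s hs ↦
    (contDiffAt_const.mul (contDiffAt_log.2 hs.ne')).add
      (contDiffAt_const.div contDiffAt_id hs.ne')
  have hφderiv : ∀ s, 0 < s → deriv φ s = m / s - K / s ^ 2 := fun s hs ↦ by
    have hinv : HasDerivAt (fun r ↦ K / r) (-K / s ^ 2) s := by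
      simpa using (hasDerivAt_const s K).fun_div (hasDerivAt_id s) hs.ne'
    exact (((hasDerivAt_log hs.ne').const_mul m).add hinv).deriv.trans (by ring)
  rw [hexpφ t (ht0.trans_le ht), hexpφ t0 ht0]
  refine exp_mul_le_of_ae_deriv_le ht (fun s hs ↦ hφ s (ht0.trans_le hs.1))
    (hu.absolutelyContinuousOnInterval_correctedEnergy ht0 ht)
    (ae_restrict_of_ae_restrict_of_subset (Ioc_subset_Icc_self.trans Icc_subset_Ici_self) ?_)
  filter_upwards [hu.ae_hasDerivAt_correctedEnergy ht0, hb,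
    ae_restrict_mem measurableSet_Ici] with s hs hbs hmem
  have hspos : 0 < s := ht0.trans_le hmem
  rw [hφderiv s hspos, hs.deriv]
  exact correctedEnergyRate_le hlam hm hspos (hmt0.trans (by gcongr; exact hmem)) hbs.1 hbs.2

lemma rpow_mul_energy_le_of_le_mul (hu : IsDampedSol t0 b lam u u') (ht0 : 0 < t0)
    (hm : 0 ≤ m) (hmM : m ≤ M) (hlam : 0 < lam) (hmt0 : m ≤ lam * t0)
    (hb : ∀ᵐ t ∂volume.restrict (Ici t0), m / t ≤ b t ∧ b t ≤ M / t) (ht : t0 ≤ t) :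
    t ^ m * oscillatorEnergy lam (u t) (u' t) ≤
      exp (m * (M - m + 5 / 2) / (lam * t0)) *
        (t0 ^ m * oscillatorEnergy lam (u t0) (u' t0)) := by
  have htpos : 0 < t := ht0.trans_le ht
  have hmt : m ≤ lam * t := hmt0.trans (by gcongr)
  have hMm : 0 ≤ 1 + M - m := by linarith
  set E := oscillatorEnergy lam (u t) (u' t)
  set E0 := oscillatorEnergy lam (u t0) (u' t0)
  set F := correctedEnergy lam m t (u t) (u' t)
  set K := m * (1 + M - m) / lam with hK
  have hF : 0 ≤ F := correctedEnergy_nonneg hlam hm htpos hmt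
  calc t ^ m * E ≤ t ^ m * (exp (m / (lam * t)) * F) := by
        gcongr
        exact oscillatorEnergy_le_exp_mul_correctedEnergy hlam hm htpos hmt
    _ ≤ t ^ m * (exp (m / (lam * t0)) * (exp (K / t) * F)) := by
        gcongr
        exact le_mul_of_one_le_left hF (one_le_exp (by positivity))
    _ = exp (m / (lam * t0)) * (t ^ m * exp (K / t) * F) := by ring
    _ ≤ exp (m / (lam * t0)) *
          (t0 ^ m * exp (K / t0) * correctedEnergy lam m t0 (u t0) (u' t0)) :=
        mul_le_mul_of_nonneg_left
          (hu.rpow_mul_exp_mul_correctedEnergy_le ht0 hm hlam hmt0 hb ht) (exp_pos _).le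
    _ ≤ exp (m / (lam * t0)) * (t0 ^ m * exp (K / t0) * (exp (m / (2 * lam * t0)) * E0)) := by
        gcongr
        exact correctedEnergy_le_exp_mul_oscillatorEnergy hlam hm ht0
    _ = exp (m / (lam * t0) + K / t0 + m / (2 * lam * t0)) * (t0 ^ m * E0) := by
        rw [exp_add, exp_add]
        ring
    _ = exp (m * (M - m + 5 / 2) / (lam * t0)) * (t0 ^ m * E0) := by
        congr 2
        rw [hK]
        field_simp
        ring

lemma rpow_mul_energy_le_exp_mul (hu : IsDampedSol t0 b lam u u') (ht0 : 0 < t0)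
    (hm : 0 ≤ m) (hmM : m ≤ M) (hlam : 0 < lam)
    (hb : ∀ᵐ t ∂volume.restrict (Ici t0), m / t ≤ b t ∧ b t ≤ M / t) (ht : t0 ≤ t) :
    t ^ m * oscillatorEnergy lam (u t) (u' t) ≤
      exp (m * (M + 5 / 2) / (lam * t0)) * (t0 ^ m * oscillatorEnergy lam (u t0) (u' t0)) := by
  have hE0 : 0 ≤ t0 ^ m * oscillatorEnergy lam (u t0) (u' t0) :=
    mul_nonneg (by positivity) oscillatorEnergy_nonneg
  have hb0 : ∀ᵐ t ∂volume.restrict (Ici t0), 0 ≤ b t := by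
    filter_upwards [hb, ae_restrict_mem measurableSet_Ici] with s hs hmem
    exact (div_nonneg hm (ht0.le.trans hmem)).trans hs.1
  rcases le_total m (lam * t0) with hmt0 | hmt0
  · refine (hu.rpow_mul_energy_le_of_le_mul ht0 hm hmM hlam hmt0 hb ht).trans ?_
    gcongr
    linarith
  set t1 := m / lam
  have hlam_t1 : lam * t1 = m := mul_div_cancel₀ m hlam.ne'
  have ht01 : t0 ≤ t1 := (le_div_iff₀' hlam).2 hmt0
  have hearly : ∀ s, t0 ≤ s → s ^ m * oscillatorEnergy lam (u s) (u' s) ≤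
      exp (m * (s / t0 - 1)) * (t0 ^ m * oscillatorEnergy lam (u t0) (u' t0)) :=
    fun s hs ↦ hu.rpow_mul_energy_le ht0 hm hb0 hs
  rcases le_total t t1 with htt1 | ht1t
  · exact (hearly t ht).trans
      (by gcongr; exact early_exponent_le ht0 hlam hm hmM ((le_div_iff₀' hlam).1 htt1))
  · have hlate := (hu.mono ht01).rpow_mul_energy_le_of_le_mul (ht0.trans_le ht01) hm hmM hlam
      hlam_t1.ge (ae_restrict_of_ae_restrict_of_subset (Ici_subset_Ici.2 ht01) hb) ht1t
    refine (hlate.trans (mul_le_mul_of_nonneg_left (hearly t1 ht01) (exp_pos _).le)).trans ?_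
    rw [← mul_assoc, ← exp_add]
    gcongr
    exact late_exponent_add_early_exponent_le ht0 hlam hmM hmt0

end IsDampedSol

theorem hyperbolic_regime_general_general
    (t0 m M : ℝ) (ht0 : 0 < t0) (hm : 0 ≤ m) (hmM : m ≤ M)
    (b : ℝ → ℝ) (hb : ∀ᵐ t ∂volume.restrict (Ici t0), m / t ≤ b t ∧ b t ≤ M / t)
    (lam : ℝ) (hlam : 0 < lam)
    (u u' : ℝ → ℝ) (hu : IsDampedSol t0 b lam u u') :
    ∀ t ≥ t0,
      u' t ^ 2 + lam ^ 2 * u t ^ 2 ≤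
        exp (m * (M + 5 / 2) / (lam * t0)) * (u' t0 ^ 2 + lam ^ 2 * u t0 ^ 2) *
          (t0 / t) ^ m := by
  intro t ht
  have htpos : 0 < t := ht0.trans_le ht
  have hweighted := hu.rpow_mul_energy_le_exp_mul ht0 hm hmM hlam hb ht
  rw [oscillatorEnergy, oscillatorEnergy] at hweighted
  rw [div_rpow ht0.le htpos.le, ← mul_div_assoc, le_div_iff₀ (by positivity)]
  linarith

theorem hyperbolic_regime_general
    (t0 m M : ℝ) (ht0 : 0 < t0) (hm : 0 < m) (hmM : m ≤ M)
    (b : ℝ → ℝ) (hbmeas : Measurable b)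
    (hb : ∀ t ≥ t0, m / t ≤ b t ∧ b t ≤ M / t)
    (lam : ℝ) (hlam : 0 < lam)
    (u u' : ℝ → ℝ) (hu : IsDampedSol t0 b lam u u') :
    ∀ t ≥ t0,
      u' t ^ 2 + lam ^ 2 * u t ^ 2 ≤
        Real.exp (m * (M + 8) / (lam * t0)) * (u' t0 ^ 2 + lam ^ 2 * u t0 ^ 2) *
          (t0 / t) ^ m := by
  intro t ht
  refine (hyperbolic_regime_general_general t0 m M ht0 hm.le hmM b
    ((ae_restrict_iff' measurableSet_Ici).2 (.of_forall hb)) lam hlam u u' hu t ht).trans ?_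
  have hdiv : 0 < t0 / t := div_pos ht0 (ht0.trans_le ht)
  gcongr
  norm_num
end

section
/- Let t0 > 0 and let b(t) := (a + r·sin(t^α))/t for t ≥ t0, where a > 0, 0 ≤ r ≤ a and α > 1. Set Γ4 := exp( (2a(a+r+8) + 5r(a+r+4))/(2λ·t0) + 3r/(α·t0^α) + r·log 3/(α−1) ). Then for every λ > 0, every solution u of the damped oscillator equation u'' + b(t)u' + λ²u = 0 satisfies u'(t)² + λ²u(t)² ≤ Γ4·(u'(t0)² + λ²u(t0)²)·(t0/t)^a for every t ≥ t0. -/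
open Real Set Filter MeasureTheory intervalIntegral

open scoped ComplexConjugate

/-!
A solution is encoded by `ψ = u' + i λ u`, whose squared norm is the energy. The unimodular function
`z = ψ / conj ψ` rotates with angular velocity `2 λ + b Im z = 2 λ + O(1 / t)`, and
`(log ‖ψ‖²)' = -b (1 + Re z)`. With `χ t = exp (i t ^ α)`, the function `b (1 + Re z)` is `1 / t`
times a linear combination of `1`, `z`, `χ`, `χ z` and `conj χ z`. The first term yields the decay
`(t0 / t) ^ a`; the others rotate, so their integrals against `dt / t` stay bounded. Integration by
parts gives this directly for `z`, `χ` and `χ z`, whose angular velocities are bounded below. The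
angular velocity `2 λ - α t ^ (α - 1) + O(1 / t)` of `conj χ z` changes sign, but only the window
where `α t ^ (α - 1)` lies between `2 λ` and `4 λ` escapes integration by parts, and its
`dt / t`-measure is at most `log 2 / (α - 1)`.
-/

/-! ### Oscillatory integrals -/

theorem integral_mul_re_eq_re_integral_smul {f : ℝ → ℝ} {w : ℝ → ℂ} {p q : ℝ}
    (hfw : IntervalIntegrable (fun s ↦ f s • w s) volume p q) :
    ∫ s in p..q, f s * (w s).re = (∫ s in p..q, f s • w s).re := by
  simpa only [RCLike.re_eq_complex_re, Complex.smul_re, smul_eq_mul] using intervalIntegral_re hfw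

theorem integral_mul_im_eq_im_integral_smul {f : ℝ → ℝ} {w : ℝ → ℂ} {p q : ℝ}
    (hfw : IntervalIntegrable (fun s ↦ f s • w s) volume p q) :
    ∫ s in p..q, f s * (w s).im = (∫ s in p..q, f s • w s).im := by
  simpa only [RCLike.im_eq_complex_im, Complex.smul_im, smul_eq_mul] using intervalIntegral_im hfw

/-- `w` is unimodular on `[p, q]` and rotates with angular velocity `ω` there, that is
`w' = i ω w`. The derivative is only required in the interior, where a solution of an equation
posed on a closed half-line is sure to be differentiable on both sides. -/
structure HasAngularVelocityOn (w : ℝ → ℂ) (ω : ℝ → ℝ) (p q : ℝ) : Prop where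
  continuousOn : ContinuousOn w (Icc p q)
  norm_eq_one : ∀ s ∈ Icc p q, ‖w s‖ = 1
  hasDerivAt : ∀ s ∈ Ioo p q, HasDerivAt w (Complex.I * ω s * w s) s

namespace HasAngularVelocityOn

variable {w w₁ w₂ : ℝ → ℂ} {ω ω₁ ω₂ : ℝ → ℝ} {p q p' q' : ℝ}

theorem mono (hw : HasAngularVelocityOn w ω p q) (hp : p ≤ p') (hq : q' ≤ q) :
    HasAngularVelocityOn w ω p' q' where
  continuousOn := hw.continuousOn.mono (Icc_subset_Icc hp hq)
  norm_eq_one s hs := hw.norm_eq_one s (Icc_subset_Icc hp hq hs)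
  hasDerivAt s hs := hw.hasDerivAt s (Ioo_subset_Ioo hp hq hs)

theorem const_mul {c : ℂ} (hc : ‖c‖ = 1) (hw : HasAngularVelocityOn w ω p q) :
    HasAngularVelocityOn (fun s ↦ c * w s) ω p q where
  continuousOn := continuousOn_const.mul hw.continuousOn
  norm_eq_one s hs := by rw [norm_mul, hc, hw.norm_eq_one s hs, one_mul]
  hasDerivAt s hs := ((hw.hasDerivAt s hs).const_mul c).congr_deriv (by ring)

theorem mul (h₁ : HasAngularVelocityOn w₁ ω₁ p q) (h₂ : HasAngularVelocityOn w₂ ω₂ p q) :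
    HasAngularVelocityOn (fun s ↦ w₁ s * w₂ s) (fun s ↦ ω₁ s + ω₂ s) p q where
  continuousOn := h₁.continuousOn.mul h₂.continuousOn
  norm_eq_one s hs := by rw [norm_mul, h₁.norm_eq_one s hs, h₂.norm_eq_one s hs, one_mul]
  hasDerivAt s hs :=
    ((h₁.hasDerivAt s hs).mul (h₂.hasDerivAt s hs)).congr_deriv (by push_cast; ring)

protected theorem star (hw : HasAngularVelocityOn w ω p q) :
    HasAngularVelocityOn (fun s ↦ conj (w s)) (fun s ↦ -ω s) p q where
  continuousOn := Complex.continuous_conj.comp_continuousOn hw.continuousOn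
  norm_eq_one s hs := by rw [Complex.norm_conj, hw.norm_eq_one s hs]
  hasDerivAt s hs := (hw.hasDerivAt s hs).star.congr_deriv (by simp)

theorem abs_re_le_one (hw : HasAngularVelocityOn w ω p q) {s : ℝ} (hs : s ∈ Icc p q) :
    |(w s).re| ≤ 1 :=
  (Complex.abs_re_le_norm _).trans_eq (hw.norm_eq_one s hs)

theorem abs_im_le_one (hw : HasAngularVelocityOn w ω p q) {s : ℝ} (hs : s ∈ Icc p q) :
    |(w s).im| ≤ 1 :=
  (Complex.abs_im_le_norm _).trans_eq (hw.norm_eq_one s hs)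

theorem hasDerivAt_im (hw : HasAngularVelocityOn w ω p q) {s : ℝ} (hs : s ∈ Ioo p q) :
    HasDerivAt (fun s ↦ (w s).im) (ω s * (w s).re) s := by
  refine (Complex.imCLM.hasFDerivAt.comp_hasDerivAt s (hw.hasDerivAt s hs)).congr_deriv ?_
  simp

/-- The derivative of `g (Im w - 1)` is `g ω Re w + g' (Im w - 1)`, and the second summand is
nonnegative. -/
theorem integral_mul_re_le (hw : HasAngularVelocityOn w ω p q) (hpq : p ≤ q) {f g h : ℝ → ℝ}
    (hf : ContinuousOn f (Icc p q)) (hg : DifferentiableOn ℝ g (Icc p q))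
    (hg_anti : AntitoneOn g (Icc p q)) (hg_nonneg : 0 ≤ g q) (hh : ContinuousOn h (Icc p q))
    (hfg : ∀ s ∈ Ioo p q, |f s - g s * ω s| ≤ h s) :
    ∫ s in p..q, f s * (w s).re ≤ 2 * g p + ∫ s in p..q, h s := by
  have hre : ContinuousOn (fun s ↦ (w s).re) (Icc p q) :=
    Complex.continuous_re.comp_continuousOn hw.continuousOn
  have him : ContinuousOn (fun s ↦ (w s).im) (Icc p q) :=
    Complex.continuous_im.comp_continuousOn hw.continuousOn
  have hfre : ContinuousOn (fun s ↦ f s * (w s).re) (Icc p q) := hf.mul hre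
  have hparts : ∫ s in p..q, (f s * (w s).re - h s) ≤
      g q * ((w q).im - 1) - g p * ((w p).im - 1) := by
    refine integral_le_sub_of_hasDeriv_right_of_le (g := fun s ↦ g s * ((w s).im - 1)) hpq
      (hg.continuousOn.mul (him.sub continuousOn_const))
      (fun s hs ↦ ?_) (hfre.sub hh).integrableOn_Icc (fun s hs ↦ ?_)
      (g' := fun s ↦ deriv g s * ((w s).im - 1) + g s * (ω s * (w s).re))
    · have hgs := (hg s (Ioo_subset_Icc_self hs)).differentiableAt (Icc_mem_nhds hs.1 hs.2)
      exact (hgs.hasDerivAt.mul ((hw.hasDerivAt_im hs).sub_const 1)).hasDerivWithinAt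
    · have hderiv : deriv g s ≤ 0 := by
        rw [← derivWithin_of_mem_nhds (Icc_mem_nhds hs.1 hs.2)]
        exact hg_anti.derivWithin_nonpos
      have him_le := (abs_le.1 (hw.abs_im_le_one (Ioo_subset_Icc_self hs))).2
      have herror : (f s - g s * ω s) * (w s).re ≤ h s := calc
        _ ≤ |f s - g s * ω s| * |(w s).re| := by rw [← abs_mul]; exact le_abs_self _
        _ ≤ |f s - g s * ω s| * 1 := by
          gcongr; exact hw.abs_re_le_one (Ioo_subset_Icc_self hs)
        _ ≤ h s := by rw [mul_one]; exact hfg s hs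
      nlinarith [mul_nonneg_of_nonpos_of_nonpos hderiv (sub_nonpos.2 him_le)]
  rw [intervalIntegral.integral_sub (hfre.intervalIntegrable_of_Icc hpq)
    (hh.intervalIntegrable_of_Icc hpq)] at hparts
  have hp := hg_anti (left_mem_Icc.2 hpq) (right_mem_Icc.2 hpq) hpq
  have him_p := abs_le.1 (hw.abs_im_le_one (left_mem_Icc.2 hpq))
  have him_q := abs_le.1 (hw.abs_im_le_one (right_mem_Icc.2 hpq))
  nlinarith

theorem norm_integral_smul_le (hw : HasAngularVelocityOn w ω p q) (hpq : p ≤ q) {f g h : ℝ → ℝ}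
    (hf : ContinuousOn f (Icc p q)) (hg : DifferentiableOn ℝ g (Icc p q))
    (hg_anti : AntitoneOn g (Icc p q)) (hg_nonneg : 0 ≤ g q) (hh : ContinuousOn h (Icc p q))
    (hfg : ∀ s ∈ Ioo p q, |f s - g s * ω s| ≤ h s) :
    ‖∫ s in p..q, f s • w s‖ ≤ 2 * g p + ∫ s in p..q, h s := by
  obtain ⟨c, hc, hnorm⟩ := Complex.exists_norm_eq_mul_self (∫ s in p..q, f s • w s)
  have hcw := hw.const_mul hc
  have hint := (hf.smul hcw.continuousOn).intervalIntegrable_of_Icc (μ := volume) hpq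
  calc ‖∫ s in p..q, f s • w s‖
      = (∫ s in p..q, f s • (c * w s)).re := by
        simp only [← mul_smul_comm]
        rw [intervalIntegral.integral_const_mul, ← hnorm, Complex.ofReal_re]
    _ = ∫ s in p..q, f s * (c * w s).re := by
        exact (integral_mul_re_eq_re_integral_smul hint).symm
    _ ≤ _ := hcw.integral_mul_re_le hpq hf hg hg_anti hg_nonneg hh hfg

theorem norm_integral_inv_smul_le (hw : HasAngularVelocityOn w ω p q) (hp : 0 < p) (hpq : p ≤ q)
    {ν η : ℝ → ℝ} (hν : DifferentiableOn ℝ ν (Icc p q)) (hν_mono : MonotoneOn ν (Icc p q))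
    (hν_pos : 0 < ν p) (hη : ContinuousOn η (Icc p q))
    (hων : ∀ s ∈ Ioo p q, |ω s - ν s| ≤ η s) :
    ‖∫ s in p..q, s⁻¹ • w s‖ ≤ (2 / p + ∫ s in p..q, η s / s) / ν p := by
  have hpos : ∀ s ∈ Icc p q, 0 < s := fun s hs ↦ hp.trans_le hs.1
  have hle : ∀ s ∈ Icc p q, ν p ≤ ν s := fun s hs ↦ hν_mono (left_mem_Icc.2 hpq) hs hs.1
  have hν_pos' : ∀ s ∈ Icc p q, 0 < ν s := fun s hs ↦ hν_pos.trans_le (hle s hs)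
  have hmul_pos : ∀ s ∈ Icc p q, 0 < s * ν s := fun s hs ↦ mul_pos (hpos s hs) (hν_pos' s hs)
  have hmain := hw.norm_integral_smul_le hpq (f := fun s ↦ s⁻¹) (g := fun s ↦ (s * ν s)⁻¹)
    (h := fun s ↦ η s / s / ν p) (continuousOn_id.inv₀ fun s hs ↦ (hpos s hs).ne')
    ((differentiableOn_id.mul hν).inv fun s hs ↦ (hmul_pos s hs).ne') ?_
    (inv_nonneg.2 (hmul_pos q (right_mem_Icc.2 hpq)).le)
    ((hη.div continuousOn_id fun s hs ↦ (hpos s hs).ne').div_const _) ?_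
  · refine hmain.trans_eq ?_
    rw [intervalIntegral.integral_div]
    field_simp
  · intro s hs t ht hst
    have := hpos t ht
    have := hν_mono hs ht hst
    exact inv_anti₀ (hmul_pos s hs) (mul_le_mul hst this (hν_pos' s hs).le (by positivity))
  · intro s hs
    have hs' := Ioo_subset_Icc_self hs
    have hs0 := hpos s hs'
    have hνs := hν_pos' s hs'
    have hη0 : 0 ≤ η s := (abs_nonneg _).trans (hων s hs)
    calc |s⁻¹ - (s * ν s)⁻¹ * ω s| = |ω s - ν s| / s / ν s := by
          rw [abs_sub_comm (ω s), div_div, ← abs_of_pos (hmul_pos s hs'), ← abs_div,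
            abs_of_pos (hmul_pos s hs')]
          congr 1
          field_simp
      _ ≤ η s / s / ν p := by gcongr; exacts [hων s hs, hle s hs']

end HasAngularVelocityOn

/-! ### Passing through a resonance -/

section Resonance

variable {w : ℝ → ℂ} {ω : ℝ → ℝ} {p q m α B : ℝ}

theorem integral_div_div_self_le (hp : 0 < p) (hpq : p ≤ q) (hB : 0 ≤ B) :
    ∫ s in p..q, B / s / s ≤ B / p := by
  have hq := hp.trans_le hpq
  have hpow : ∀ s : ℝ, B / s / s = B * s ^ (-2 : ℤ) := fun s ↦ by
    rw [zpow_neg, div_div, div_eq_mul_inv, ← sq]; norm_cast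
  simp only [hpow, intervalIntegral.integral_const_mul]
  rw [integral_zpow (Or.inr ⟨by norm_num, notMem_uIcc_of_lt hp hq⟩)]
  norm_num
  have : 0 ≤ B * q⁻¹ := by positivity
  rw [div_eq_mul_inv B p]
  linarith

theorem integral_rpow_div_self_le (hp : 0 < p) (hpq : p ≤ q) (hα : 1 < α) :
    ∫ s in p..q, s ^ (α - 1) / s ≤ q ^ (α - 1) / (α - 1) := by
  have hpow : ∀ s ∈ uIcc p q, s ^ (α - 1) / s = s ^ (α - 2) := fun s hs ↦ by
    rw [uIcc_of_le hpq] at hs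
    rw [← rpow_sub_one (hp.trans_le hs.1).ne']; ring_nf
  rw [intervalIntegral.integral_congr hpow, integral_rpow (Or.inl (by linarith))]
  rw [show α - 2 + 1 = α - 1 by ring]
  have : 0 < α - 1 := sub_pos.2 hα
  gcongr
  exact sub_le_self _ (rpow_nonneg hp.le _)

theorem monotoneOn_const_mul_rpow_add (hp : 0 < p) (hα : 1 < α) (d : ℝ) :
    MonotoneOn (fun s : ℝ ↦ α * s ^ (α - 1) + d) (Icc p q) := by
  intro s hs t _ hst
  have hs0 : 0 ≤ s := hp.le.trans hs.1
  have : 0 ≤ α - 1 := by linarith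
  dsimp only
  gcongr

theorem differentiableOn_const_mul_rpow_add (hp : 0 < p) (d : ℝ) :
    DifferentiableOn ℝ (fun s : ℝ ↦ α * s ^ (α - 1) + d) (Icc p q) :=
  ((differentiableOn_id.rpow_const fun _ hs ↦
    Or.inl (hp.trans_le hs.1).ne').const_mul α).add_const d

theorem const_mul_rpow_sub_one_le_iff (hα : 1 < α) (hm : 0 ≤ m) {s : ℝ} (hs : 0 ≤ s) :
    α * s ^ (α - 1) ≤ m ↔ s ≤ (m / α) ^ (α - 1)⁻¹ := by
  have hα₀ : 0 < α := by linarith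
  rw [le_rpow_inv_iff_of_pos hs (by positivity) (sub_pos.2 hα), le_div_iff₀' hα₀]

theorem le_const_mul_rpow_sub_one_iff (hα : 1 < α) (hm : 0 ≤ m) {s : ℝ} (hs : 0 ≤ s) :
    m ≤ α * s ^ (α - 1) ↔ (m / α) ^ (α - 1)⁻¹ ≤ s := by
  have hα₀ : 0 < α := by linarith
  rw [rpow_inv_le_iff_of_pos (by positivity) hs (sub_pos.2 hα), div_le_iff₀' hα₀]

theorem norm_integral_le_add_of_split {f : ℝ → ℂ} {c L R : ℝ} (hpq : p ≤ q)
    (hf : ContinuousOn f (Icc p q)) (hL : 0 ≤ L) (hR : 0 ≤ R)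
    (hleft : ∀ y ∈ Icc p q, y ≤ c → ‖∫ s in p..y, f s‖ ≤ L)
    (hright : ∀ x ∈ Icc p q, c ≤ x → ‖∫ s in x..q, f s‖ ≤ R) :
    ‖∫ s in p..q, f s‖ ≤ L + R := by
  rcases le_total c p with hcp | hpc
  · exact (hright p (left_mem_Icc.2 hpq) hcp).trans (le_add_of_nonneg_left hL)
  rcases le_total q c with hqc | hcq
  · exact (hleft q (right_mem_Icc.2 hpq) hqc).trans (le_add_of_nonneg_right hR)
  have hpc_int := (hf.mono (Icc_subset_Icc_right hcq)).intervalIntegrable_of_Icc (μ := volume) hpc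
  have hcq_int := (hf.mono (Icc_subset_Icc_left hpc)).intervalIntegrable_of_Icc (μ := volume) hcq
  rw [← integral_add_adjacent_intervals hpc_int hcq_int]
  exact norm_add_le_of_le (hleft c ⟨hpc, hcq⟩ le_rfl) (hright c ⟨hpc, hcq⟩ le_rfl)

namespace HasAngularVelocityOn

theorem norm_integral_inv_smul_le_of_sub_le_div (hw : HasAngularVelocityOn w ω p q) (hp : 0 < p)
    (hpq : p ≤ q) {ν : ℝ → ℝ} (hν : DifferentiableOn ℝ ν (Icc p q))
    (hν_mono : MonotoneOn ν (Icc p q)) (hν_pos : 0 < ν p) (hB : 0 ≤ B)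
    (hων : ∀ s ∈ Ioo p q, |ω s - ν s| ≤ B / s) :
    ‖∫ s in p..q, s⁻¹ • w s‖ ≤ (2 + B) / (p * ν p) := by
  have hη : ContinuousOn (fun s ↦ B / s) (Icc p q) :=
    continuousOn_const.div continuousOn_id fun s hs ↦ (hp.trans_le hs.1).ne'
  calc ‖∫ s in p..q, s⁻¹ • w s‖
      ≤ (2 / p + ∫ s in p..q, B / s / s) / ν p :=
        hw.norm_integral_inv_smul_le hp hpq hν hν_mono hν_pos hη hων
    _ ≤ (2 / p + B / p) / ν p := by gcongr; exact integral_div_div_self_le hp hpq hB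
    _ = (2 + B) / (p * ν p) := by rw [← add_div, div_div]

theorem norm_integral_inv_smul_le_log (hw : HasAngularVelocityOn w ω p q) (hp : 0 < p)
    (hpq : p ≤ q) : ‖∫ s in p..q, s⁻¹ • w s‖ ≤ log (q / p) := by
  rw [← integral_inv_of_pos hp (hp.trans_le hpq)]
  have hint : IntervalIntegrable (fun s : ℝ ↦ s⁻¹) volume p q :=
    (continuousOn_id.inv₀ fun s hs ↦ (hp.trans_le hs.1).ne').intervalIntegrable_of_Icc hpq
  refine intervalIntegral.norm_integral_le_of_norm_le hpq (ae_of_all _ fun s hs ↦ ?_) hint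
  rw [norm_smul, hw.norm_eq_one s (Ioc_subset_Icc_self hs), mul_one,
    norm_of_nonneg (inv_nonneg.2 (hp.trans hs.1).le)]

theorem norm_integral_inv_smul_le_of_rpow_le (hw : HasAngularVelocityOn w ω p q) (hp : 0 < p)
    (hpq : p ≤ q) (hm : 0 < m) (hα : 1 < α) (hB : 0 ≤ B)
    (hω : ∀ s ∈ Ioo p q, |ω s - (m - α * s ^ (α - 1))| ≤ B / s) (hq : α * q ^ (α - 1) ≤ m) :
    ‖∫ s in p..q, s⁻¹ • w s‖ ≤ (2 + B) / (p * m) + 1 / (α - 1) := by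
  have hne : ∀ s ∈ Icc p q, s ≠ 0 := fun s hs ↦ (hp.trans_le hs.1).ne'
  have hrpow : ContinuousOn (fun s : ℝ ↦ s ^ (α - 1)) (Icc p q) :=
    continuousOn_id.rpow_const fun s hs ↦ Or.inl (hne s hs)
  have hdiv : ContinuousOn (fun s ↦ B / s) (Icc p q) := continuousOn_const.div continuousOn_id hne
  have herror : ∀ s ∈ Ioo p q, |ω s - m| ≤ α * s ^ (α - 1) + B / s := fun s hs ↦ by
    have hs0 : 0 < s := hp.trans hs.1
    have hbounds := abs_le.1 (hω s hs)
    have : 0 ≤ α * s ^ (α - 1) := by positivity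
    exact abs_le.2 ⟨by linarith, by linarith⟩
  have hint : ∫ s in p..q, (α * s ^ (α - 1) + B / s) / s ≤ m / (α - 1) + B / p := by
    have hint₁ : IntervalIntegrable (fun s ↦ α * (s ^ (α - 1) / s)) volume p q :=
      (continuousOn_const.mul (hrpow.div continuousOn_id hne)).intervalIntegrable_of_Icc hpq
    have hint₂ : IntervalIntegrable (fun s ↦ B / s / s) volume p q :=
      (hdiv.div continuousOn_id hne).intervalIntegrable_of_Icc hpq
    have : 0 < α - 1 := sub_pos.2 hα
    simp only [add_div, mul_div_assoc]
    rw [intervalIntegral.integral_add hint₁ hint₂, intervalIntegral.integral_const_mul]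
    refine add_le_add ?_ (integral_div_div_self_le hp hpq hB)
    calc _ ≤ α * (q ^ (α - 1) / (α - 1)) := by
          gcongr; exact integral_rpow_div_self_le hp hpq hα
      _ = α * q ^ (α - 1) / (α - 1) := by rw [mul_div_assoc]
      _ ≤ m / (α - 1) := by gcongr
  calc ‖∫ s in p..q, s⁻¹ • w s‖
      ≤ (2 / p + ∫ s in p..q, (α * s ^ (α - 1) + B / s) / s) / m :=
        hw.norm_integral_inv_smul_le hp hpq (ν := fun _ ↦ m) (differentiableOn_const m)
          monotoneOn_const hm ((continuousOn_const.mul hrpow).add hdiv) herror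
    _ ≤ (2 / p + (m / (α - 1) + B / p)) / m := by gcongr
    _ = (2 + B) / (p * m) + 1 / (α - 1) := by
        have : α - 1 ≠ 0 := (sub_pos.2 hα).ne'
        field_simp
        ring

theorem norm_integral_inv_smul_le_of_le_rpow (hw : HasAngularVelocityOn w ω p q) (hp : 0 < p)
    (hpq : p ≤ q) (hm : 0 < m) (hα : 1 < α) (hB : 0 ≤ B)
    (hω : ∀ s ∈ Ioo p q, |ω s - (m - α * s ^ (α - 1))| ≤ B / s) (hp' : 2 * m ≤ α * p ^ (α - 1)) :
    ‖∫ s in p..q, s⁻¹ • w s‖ ≤ (2 + B) / (p * m) := by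
  have hmp : m ≤ α * p ^ (α - 1) + -m := by linarith
  have hstar := hw.star.norm_integral_inv_smul_le_of_sub_le_div hp hpq
    (differentiableOn_const_mul_rpow_add hp (-m)) (monotoneOn_const_mul_rpow_add hp hα (-m))
    (hm.trans_le hmp) hB fun s hs ↦ by
      convert hω s hs using 1
      rw [← abs_neg]
      ring_nf
  calc ‖∫ s in p..q, s⁻¹ • w s‖ = ‖∫ s in p..q, s⁻¹ • conj (w s)‖ := by
        rw [← Complex.norm_conj, ← intervalIntegral_conj]
        simp only [Complex.real_smul, map_mul, Complex.conj_ofReal]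
    _ ≤ (2 + B) / (p * m) := hstar.trans (by gcongr)

theorem norm_integral_inv_smul_le_of_rpow_le_two_mul (hw : HasAngularVelocityOn w ω p q)
    (hp : 0 < p) (hpq : p ≤ q) (hα : 1 < α) (hp' : m ≤ α * p ^ (α - 1))
    (hq' : α * q ^ (α - 1) ≤ 2 * m) :
    ‖∫ s in p..q, s⁻¹ • w s‖ ≤ log 2 / (α - 1) := by
  have hq : 0 < q := hp.trans_le hpq
  have hα₀ : 0 < α := by linarith
  have hratio : (q / p) ^ (α - 1) ≤ 2 := by
    rw [div_rpow hq.le hp.le, div_le_iff₀ (by positivity), ← mul_le_mul_iff_right₀ hα₀]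
    linarith
  refine (hw.norm_integral_inv_smul_le_log hp hpq).trans ?_
  rw [le_div_iff₀' (sub_pos.2 hα), ← log_rpow (by positivity)]
  exact log_le_log (by positivity) hratio

/-- The phase is stationary where `α s ^ (α - 1) = m`. The window where `α s ^ (α - 1)` lies
between `m` and `2 m` carries the mass `log 2 / (α - 1)` of the measure `ds / s`; before it the
velocity is `m` up to `α s ^ (α - 1)`, which contributes `1 / (α - 1)`, and after it the velocity
is at most `-m`, both up to `B / s`. -/
theorem norm_integral_inv_smul_le_of_resonance (hw : HasAngularVelocityOn w ω p q) (hp : 0 < p)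
    (hpq : p ≤ q) (hm : 0 < m) (hα : 1 < α) (hB : 0 ≤ B)
    (hω : ∀ s ∈ Ioo p q, |ω s - (m - α * s ^ (α - 1))| ≤ B / s) :
    ‖∫ s in p..q, s⁻¹ • w s‖ ≤ 2 * ((2 + B) / (p * m)) + (1 + log 2) / (α - 1) := by
  have : 0 < α - 1 := sub_pos.2 hα
  have hm₂ : 0 ≤ 2 * m := by positivity
  have : 0 ≤ log 2 := log_nonneg one_le_two
  have hcont : ContinuousOn (fun s ↦ s⁻¹ • w s) (Icc p q) :=
    (continuousOn_id.inv₀ fun s hs ↦ (hp.trans_le hs.1).ne').smul hw.continuousOn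
  have hbefore : ∀ y ∈ Icc p q, y ≤ (m / α) ^ (α - 1)⁻¹ →
      ‖∫ s in p..y, s⁻¹ • w s‖ ≤ (2 + B) / (p * m) + 1 / (α - 1) := fun y hy hym ↦
    (hw.mono le_rfl hy.2).norm_integral_inv_smul_le_of_rpow_le hp hy.1 hm hα hB
      (fun s hs ↦ hω s (Ioo_subset_Ioo_right hy.2 hs))
      ((const_mul_rpow_sub_one_le_iff hα hm.le (hp.le.trans hy.1)).2 hym)
  have hafter : ∀ x ∈ Icc p q, (2 * m / α) ^ (α - 1)⁻¹ ≤ x →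
      ‖∫ s in x..q, s⁻¹ • w s‖ ≤ (2 + B) / (p * m) := fun x hx hmx ↦ by
    refine ((hw.mono hx.1 le_rfl).norm_integral_inv_smul_le_of_le_rpow (hp.trans_le hx.1) hx.2 hm
      hα hB (fun s hs ↦ hω s (Ioo_subset_Ioo_left hx.1 hs))
      ((le_const_mul_rpow_sub_one_iff hα hm₂ (hp.le.trans hx.1)).2 hmx)).trans ?_
    gcongr
    exact hx.1
  have hfrom : ∀ x ∈ Icc p q, (m / α) ^ (α - 1)⁻¹ ≤ x →
      ‖∫ s in x..q, s⁻¹ • w s‖ ≤ log 2 / (α - 1) + (2 + B) / (p * m) := fun x hx hmx ↦ by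
    have hx₀ : 0 < x := hp.trans_le hx.1
    refine norm_integral_le_add_of_split hx.2 (hcont.mono (Icc_subset_Icc_left hx.1))
      (by positivity) (by positivity) (fun y hy hym ↦ ?_)
      fun y hy ↦ hafter y ⟨hx.1.trans hy.1, hy.2⟩
    exact (hw.mono hx.1 hy.2).norm_integral_inv_smul_le_of_rpow_le_two_mul hx₀ hy.1 hα
      ((le_const_mul_rpow_sub_one_iff hα hm.le hx₀.le).2 hmx)
      ((const_mul_rpow_sub_one_le_iff hα hm₂ (hx₀.le.trans hy.1)).2 hym)
  calc ‖∫ s in p..q, s⁻¹ • w s‖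
      ≤ (2 + B) / (p * m) + 1 / (α - 1) + (log 2 / (α - 1) + (2 + B) / (p * m)) :=
        norm_integral_le_add_of_split hpq hcont (by positivity) (by positivity) hbefore hfrom
    _ = 2 * ((2 + B) / (p * m)) + (1 + log 2) / (α - 1) := by ring

end HasAngularVelocityOn

end Resonance

/-! ### The damped oscillator in complex form -/

/-- The damped oscillator equation in complex form: along a solution, `ψ = u' + i λ u` satisfies
`ψ' = i λ ψ - b Re ψ`. The derivative is only required in the interior of `[p, q]`, as in
`HasAngularVelocityOn`. -/
structure IsDampedFlowOn (lam : ℝ) (b : ℝ → ℝ) (ψ : ℝ → ℂ) (p q : ℝ) : Prop where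
  continuousOn : ContinuousOn ψ (Icc p q)
  hasDerivAt : ∀ s ∈ Ioo p q, HasDerivAt ψ (Complex.I * lam * ψ s - b s * (ψ s).re) s

/-- The phasor `u' + i λ u` of a solution, whose squared norm is the energy. -/
def phasor (lam : ℝ) (u u' : ℝ → ℝ) (t : ℝ) : ℂ := ⟨u' t, lam * u t⟩

/-- The unimodular function `e ^ (2 i θ)`, where `θ` is the argument of `ψ` (the Prüfer angle when
`ψ` is the phasor of a solution). Writing it as a quotient avoids choosing an argument; it is `0`
where `ψ` vanishes. -/
noncomputable def doubledPhase (ψ : ℝ → ℂ) (t : ℝ) : ℂ := ψ t / conj (ψ t)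

theorem norm_phasor_sq (lam : ℝ) (u u' : ℝ → ℝ) (t : ℝ) :
    ‖phasor lam u u' t‖ ^ 2 = u' t ^ 2 + lam ^ 2 * u t ^ 2 := by
  rw [Complex.sq_norm, phasor, Complex.normSq_mk]
  ring

theorem re_doubledPhase_mul_norm_sq (ψ : ℝ → ℂ) (t : ℝ) :
    (doubledPhase ψ t).re * ‖ψ t‖ ^ 2 = (ψ t).re ^ 2 - (ψ t).im ^ 2 := by
  by_cases h0 : ψ t = 0
  · simp [h0]
  have : Complex.normSq (ψ t) ≠ 0 := by simpa using h0
  rw [doubledPhase, Complex.sq_norm, Complex.div_re, Complex.normSq_conj, Complex.conj_re,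
    Complex.conj_im]
  field_simp
  ring

namespace IsDampedSol

variable {t0 lam : ℝ} {b u u' : ℝ → ℝ}

theorem eq_add_integral (hu : IsDampedSol t0 b lam u u') {t : ℝ} (ht : t0 ≤ t) :
    u' t = u' t0 + ∫ s in t0..t, -(b s * u' s + lam ^ 2 * u s) := by
  obtain ⟨-, -, w, -, hint, hae⟩ := hu
  rw [hint t ht]
  congr 1
  refine intervalIntegral.integral_congr_ae ?_
  filter_upwards [(ae_restrict_iff' measurableSet_Ici).1 hae] with s hs hst
  rw [uIoc_of_le ht] at hst
  linarith [hs hst.1.le]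

theorem hasDerivAt_deriv (hu : IsDampedSol t0 b lam u u') (hb : ContinuousOn b (Ici t0)) {t : ℝ}
    (ht : t0 < t) : HasDerivAt u' (-(b t * u' t + lam ^ 2 * u t)) t := by
  have hcont : ContinuousOn (fun s ↦ -(b s * u' s + lam ^ 2 * u s)) (Ici t0) :=
    ((hb.mul hu.2.1).add (continuousOn_const.mul fun s hs ↦
      (hu.1 s hs).continuousAt.continuousWithinAt)).neg
  have hFTC := integral_hasDerivAt_right
    ((hcont.mono Icc_subset_Ici_self).intervalIntegrable_of_Icc ht.le)
    ((hcont.mono Ioi_subset_Ici_self).stronglyMeasurableAtFilter isOpen_Ioi t ht)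
    (hcont.continuousAt (Ici_mem_nhds ht))
  refine (hFTC.const_add (u' t0)).congr_of_eventuallyEq ?_
  filter_upwards [Ioi_mem_nhds ht] with s hs
  exact hu.eq_add_integral (le_of_lt hs)

theorem isDampedFlowOn_phasor (hu : IsDampedSol t0 b lam u u') (hb : ContinuousOn b (Ici t0))
    (T : ℝ) : IsDampedFlowOn lam b (phasor lam u u') t0 T := by
  have hphasor : phasor lam u u' = fun t ↦ (u' t : ℂ) + Complex.I * lam * u t := by
    ext t
    apply Complex.ext <;> simp [phasor]
  constructor
  · have hcont : ContinuousOn u (Ici t0) := fun s hs ↦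
      (hu.1 s hs).continuousAt.continuousWithinAt
    rw [hphasor]
    exact ((Complex.continuous_ofReal.comp_continuousOn hu.2.1).add (continuousOn_const.mul
      (Complex.continuous_ofReal.comp_continuousOn hcont))).mono Icc_subset_Ici_self
  · intro s hs
    have hderiv := (hu.hasDerivAt_deriv hb hs.1).ofReal_comp.add
      ((hu.1 s hs.1.le).ofReal_comp.const_mul (Complex.I * lam))
    rw [hphasor]
    refine hderiv.congr_deriv ?_
    have hre : ((u' s : ℂ) + Complex.I * lam * u s).re = u' s := by simp
    rw [hre]
    push_cast
    linear_combination -(lam : ℂ) ^ 2 * u s * Complex.I_sq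

end IsDampedSol

namespace IsDampedFlowOn

variable {lam p q : ℝ} {b : ℝ → ℝ} {ψ : ℝ → ℂ}

theorem hasDerivAt_norm_sq (hψ : IsDampedFlowOn lam b ψ p q) {s : ℝ} (hs : s ∈ Ioo p q) :
    HasDerivAt (fun s ↦ ‖ψ s‖ ^ 2) (-2 * b s * (ψ s).re ^ 2) s := by
  refine (hψ.hasDerivAt s hs).norm_sq.congr_deriv ?_
  simp only [Complex.inner, Complex.mul_re, Complex.mul_im, Complex.sub_re, Complex.sub_im,
    Complex.I_re, Complex.I_im, Complex.ofReal_re, Complex.ofReal_im, Complex.conj_re,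
    Complex.conj_im]
  ring

/-- Although `‖ψ‖ ^ 2` need not be monotone, `‖ψ s‖ ^ 2 exp (-2 M s)` is antitone as soon as
`b ≥ -M`. -/
theorem ne_zero_of_ne_zero_right (hψ : IsDampedFlowOn lam b ψ p q)
    (hb : ContinuousOn b (Icc p q)) (hq : ψ q ≠ 0) {s : ℝ} (hs : s ∈ Icc p q) : ψ s ≠ 0 := by
  obtain ⟨M, hM⟩ := (isCompact_Icc.image_of_continuousOn hb.neg).bddAbove
  have hanti : AntitoneOn (fun s ↦ ‖ψ s‖ ^ 2 * exp (-2 * |M| * s)) (Icc p q) := by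
    refine antitoneOn_of_hasDerivWithinAt_nonpos (convex_Icc p q)
      ((hψ.continuousOn.norm.pow 2).mul (by fun_prop)) (f' := fun s ↦
        (-2 * b s * (ψ s).re ^ 2 - 2 * |M| * ‖ψ s‖ ^ 2) * exp (-2 * |M| * s)) ?_ ?_
    all_goals intro s hs; rw [interior_Icc] at hs
    · have hexp := ((hasDerivAt_id s).const_mul (-2 * |M|)).exp
      exact (((hψ.hasDerivAt_norm_sq hs).mul hexp).congr_deriv
        (by simp only [id_eq]; ring)).hasDerivWithinAt
    · have hbM : -b s ≤ |M| := (hM ⟨s, Ioo_subset_Icc_self hs, rfl⟩).trans (le_abs_self M)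
      have hre : (ψ s).re ^ 2 ≤ ‖ψ s‖ ^ 2 := by
        rw [← sq_abs]
        gcongr
        exact Complex.abs_re_le_norm _
      refine mul_nonpos_of_nonpos_of_nonneg ?_ (exp_pos _).le
      nlinarith [mul_le_mul_of_nonneg_right hbM (sq_nonneg (ψ s).re),
        mul_le_mul_of_nonneg_left hre (abs_nonneg M)]
  intro hs0
  have hle := hanti hs (right_mem_Icc.2 (hs.1.trans hs.2)) hs.2
  have hpos : 0 < ‖ψ q‖ ^ 2 * exp (-2 * |M| * q) := by positivity
  simp only [hs0, norm_zero] at hle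
  linarith

theorem hasAngularVelocityOn_doubledPhase (hψ : IsDampedFlowOn lam b ψ p q)
    (h0 : ∀ s ∈ Icc p q, ψ s ≠ 0) :
    HasAngularVelocityOn (doubledPhase ψ) (fun s ↦ 2 * lam + b s * (doubledPhase ψ s).im) p q := by
  have hconj : ∀ s ∈ Icc p q, conj (ψ s) ≠ 0 := fun s hs ↦
    (map_ne_zero (starRingEnd ℂ)).2 (h0 s hs)
  refine ⟨hψ.continuousOn.div (Complex.continuous_conj.comp_continuousOn hψ.continuousOn) hconj,
    fun s hs ↦ ?_, fun s hs ↦ ?_⟩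
  · rw [doubledPhase, norm_div, Complex.norm_conj, div_self (norm_ne_zero_iff.2 (h0 s hs))]
  · have hψs := h0 s (Ioo_subset_Icc_self hs)
    have hconjs := hconj s (Ioo_subset_Icc_self hs)
    have hderiv := hψ.hasDerivAt s hs
    refine (hderiv.div hderiv.star hconjs).congr_deriv ?_
    have him : ((doubledPhase ψ s).im : ℂ) =
        (ψ s / conj (ψ s) - conj (ψ s) / ψ s) / (2 * Complex.I) := by
      rw [Complex.im_eq_sub_conj, doubledPhase, map_div₀, Complex.conj_conj]
    simp only [Complex.star_def, map_sub, map_mul, Complex.conj_I, Complex.conj_ofReal]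
    push_cast
    rw [him, doubledPhase, Complex.re_eq_add_conj]
    field_simp
    ring

theorem log_norm_sq_sub_log_norm_sq (hψ : IsDampedFlowOn lam b ψ p q) (hpq : p ≤ q)
    (hb : ContinuousOn b (Icc p q)) (h0 : ∀ s ∈ Icc p q, ψ s ≠ 0) :
    log (‖ψ q‖ ^ 2) - log (‖ψ p‖ ^ 2) = -∫ s in p..q, b s * (1 + (doubledPhase ψ s).re) := by
  have hz := hψ.hasAngularVelocityOn_doubledPhase h0
  have hne : ∀ s ∈ Icc p q, ‖ψ s‖ ^ 2 ≠ 0 := fun s hs ↦ by simpa using h0 s hs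
  have hcont : ContinuousOn (fun s ↦ -(b s * (1 + (doubledPhase ψ s).re))) (Icc p q) :=
    (hb.mul (continuousOn_const.add
      (Complex.continuous_re.comp_continuousOn hz.continuousOn))).neg
  rw [← intervalIntegral.integral_neg]
  refine (integral_eq_sub_of_hasDerivAt_of_le hpq ((hψ.continuousOn.norm.pow 2).log hne)
    (fun s hs ↦ ?_) (hcont.intervalIntegrable_of_Icc hpq)).symm
  have hs' := Ioo_subset_Icc_self hs
  refine ((hψ.hasDerivAt_norm_sq hs).log (hne s hs')).congr_deriv ?_
  rw [div_eq_iff (hne s hs')]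
  have hnorm : ‖ψ s‖ ^ 2 = (ψ s).re ^ 2 + (ψ s).im ^ 2 := by
    rw [Complex.sq_norm, Complex.normSq_apply]; ring
  linear_combination b s * re_doubledPhase_mul_norm_sq ψ s + b s * hnorm

end IsDampedFlowOn

/-! ### Damping by a chirp -/

section Chirp

variable {a r α lam p q m B : ℝ} {z : ℝ → ℂ} {ω : ℝ → ℝ}

/-- The chirp `e ^ (i t ^ α)`, whose imaginary part is the oscillating part of the damping. -/
noncomputable def chirp (α t : ℝ) : ℂ := Complex.exp (Complex.I * (t ^ α : ℝ))

/-- The damping coefficient `b` with power-law chirp of exponent `α`. -/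
noncomputable def chirpDamping (a r α t : ℝ) : ℝ := (a + r * sin (t ^ α)) / t

theorem hasAngularVelocityOn_chirp (α : ℝ) (hp : 0 < p) (q : ℝ) :
    HasAngularVelocityOn (chirp α) (fun s ↦ α * s ^ (α - 1)) p q := by
  have hderiv : ∀ s, 0 < s → HasDerivAt (chirp α) (Complex.I * ↑(α * s ^ (α - 1)) * chirp α s) s :=
    fun s hs ↦ (((hasDerivAt_rpow_const (Or.inl hs.ne')).ofReal_comp.const_mul Complex.I).cexp
      ).congr_deriv (mul_comm _ _)
  exact ⟨fun s hs ↦ (hderiv s (hp.trans_le hs.1)).continuousAt.continuousWithinAt,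
    fun s _ ↦ Complex.norm_exp_I_mul_ofReal _, fun s hs ↦ hderiv s (hp.trans hs.1)⟩

theorem sin_rpow_eq_im_chirp (α t : ℝ) : sin (t ^ α) = (chirp α t).im := by
  rw [chirp, mul_comm, Complex.exp_ofReal_mul_I_im]

theorem sin_rpow_mul_re (α t : ℝ) (x : ℂ) :
    sin (t ^ α) * x.re = ((chirp α t * x).im - (conj (chirp α t) * x).im) / 2 := by
  rw [sin_rpow_eq_im_chirp, Complex.mul_im, Complex.mul_im, Complex.conj_re, Complex.conj_im]
  ring

theorem continuousOn_chirpDamping (hp : 0 < p) : ContinuousOn (chirpDamping a r α) (Ici p) := by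
  have hne : ∀ s ∈ Ici p, s ≠ 0 := fun s hs ↦ (hp.trans_le hs).ne'
  exact (continuousOn_const.add (continuousOn_const.mul (continuous_sin.comp_continuousOn
    (continuousOn_id.rpow_const fun s hs ↦ Or.inl (hne s hs))))).div continuousOn_id hne

theorem abs_chirpDamping_le (ha : 0 ≤ a) (hr : 0 ≤ r) {s : ℝ} (hs : 0 < s) :
    |chirpDamping a r α s| ≤ (a + r) / s := by
  rw [chirpDamping, abs_div, abs_of_pos hs]
  gcongr
  calc |a + r * sin (s ^ α)| ≤ |a| + |r| * |sin (s ^ α)| := by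
        rw [← abs_mul]; exact abs_add_le _ _
    _ ≤ a + r * 1 := by
        rw [abs_of_nonneg ha, abs_of_nonneg hr]; gcongr; exact abs_sin_le_one _
    _ = a + r := by rw [mul_one]

theorem integral_chirpDamping_mul (hz : ContinuousOn z (Icc p q)) (hp : 0 < p) (hpq : p ≤ q) :
    ∫ s in p..q, chirpDamping a r α s * (1 + (z s).re) =
      a * log (q / p) + a * (∫ s in p..q, s⁻¹ • z s).re +
        r * (∫ s in p..q, s⁻¹ • chirp α s).im +
        r / 2 * (∫ s in p..q, s⁻¹ • (chirp α s * z s)).im -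
        r / 2 * (∫ s in p..q, s⁻¹ • (conj (chirp α s) * z s)).im := by
  have hχ := (hasAngularVelocityOn_chirp α hp q).continuousOn
  have hinv : ContinuousOn (fun s : ℝ ↦ s⁻¹) (Icc p q) :=
    continuousOn_id.inv₀ fun s hs ↦ (hp.trans_le hs.1).ne'
  have hpointwise : ∀ s, chirpDamping a r α s * (1 + (z s).re) =
      a * s⁻¹ + a * (s⁻¹ * (z s).re) + r * (s⁻¹ * (chirp α s).im) +
        r / 2 * (s⁻¹ * (chirp α s * z s).im) - r / 2 * (s⁻¹ * (conj (chirp α s) * z s).im) :=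
    fun s ↦ by
      rw [chirpDamping, div_eq_mul_inv]
      linear_combination r * s⁻¹ * sin_rpow_mul_re α s (z s) + r * s⁻¹ * sin_rpow_eq_im_chirp α s
  simp only [hpointwise]
  rw [intervalIntegral.integral_sub, intervalIntegral.integral_add, intervalIntegral.integral_add,
    intervalIntegral.integral_add]
  · simp only [intervalIntegral.integral_const_mul]
    rw [integral_mul_re_eq_re_integral_smul, integral_mul_im_eq_im_integral_smul,
      integral_mul_im_eq_im_integral_smul, integral_mul_im_eq_im_integral_smul,
      integral_inv_of_pos hp (hp.trans_le hpq)]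
    all_goals exact ContinuousOn.intervalIntegrable_of_Icc hpq (by fun_prop)
  all_goals exact ContinuousOn.intervalIntegrable_of_Icc hpq (by fun_prop)

theorem norm_integral_inv_smul_chirp_le (hp : 0 < p) (hpq : p ≤ q) (hα : 1 < α) :
    ‖∫ s in p..q, s⁻¹ • chirp α s‖ ≤ 2 / (α * p ^ α) := by
  have hle := (hasAngularVelocityOn_chirp α hp q).norm_integral_inv_smul_le_of_sub_le_div hp hpq
    (differentiableOn_const_mul_rpow_add hp 0) (monotoneOn_const_mul_rpow_add hp hα 0)
    (by positivity) le_rfl (fun s _ ↦ by simp)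
  convert hle using 2
  · rw [add_zero]
  · rw [add_zero, rpow_sub_one hp.ne']
    field_simp

theorem norm_integral_inv_smul_chirp_mul_le (hz : HasAngularVelocityOn z ω p q) (hp : 0 < p)
    (hpq : p ≤ q) (hα : 1 < α) (hm : 0 < m) (hB : 0 ≤ B) (hω : ∀ s ∈ Ioo p q, |ω s - m| ≤ B / s) :
    ‖∫ s in p..q, s⁻¹ • (chirp α s * z s)‖ ≤ (2 + B) / (p * m) := by
  have hle := ((hasAngularVelocityOn_chirp α hp q).mul hz).norm_integral_inv_smul_le_of_sub_le_div
    hp hpq (differentiableOn_const_mul_rpow_add hp m) (monotoneOn_const_mul_rpow_add hp hα m)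
    (by positivity) hB (fun s hs ↦ by rw [add_sub_add_left_eq_sub]; exact hω s hs)
  refine hle.trans ?_
  gcongr
  exact le_add_of_nonneg_left (by positivity)

theorem norm_integral_inv_smul_conj_chirp_mul_le (hz : HasAngularVelocityOn z ω p q) (hp : 0 < p)
    (hpq : p ≤ q) (hα : 1 < α) (hm : 0 < m) (hB : 0 ≤ B) (hω : ∀ s ∈ Ioo p q, |ω s - m| ≤ B / s) :
    ‖∫ s in p..q, s⁻¹ • (conj (chirp α s) * z s)‖ ≤
      2 * ((2 + B) / (p * m)) + (1 + log 2) / (α - 1) :=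
  ((hasAngularVelocityOn_chirp α hp q).star.mul hz).norm_integral_inv_smul_le_of_resonance hp hpq
    hm hα hB fun s hs ↦ by
      convert hω s hs using 2
      ring

theorem le_integral_chirpDamping_mul (hz : HasAngularVelocityOn z ω p q)
    (hp : 0 < p) (hpq : p ≤ q) (ha : 0 ≤ a) (hr : 0 ≤ r) (hα : 1 < α) (hm : 0 < m)
    (hω : ∀ s ∈ Ioo p q, |ω s - m| ≤ (a + r) / s) :
    a * log (q / p) - (a + 3 / 2 * r) * ((2 + (a + r)) / (p * m)) - 2 * r / (α * p ^ α) -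
        r / 2 * ((1 + log 2) / (α - 1)) ≤
      ∫ s in p..q, chirpDamping a r α s * (1 + (z s).re) := by
  have hB : 0 ≤ a + r := add_nonneg ha hr
  have : 0 ≤ r / 2 := by positivity
  have hz_re := (Complex.abs_re_le_norm _).trans
    (hz.norm_integral_inv_smul_le_of_sub_le_div hp hpq (differentiableOn_const m)
      monotoneOn_const hm hB hω)
  have hχ_im := (Complex.abs_im_le_norm _).trans (norm_integral_inv_smul_chirp_le hp hpq hα)
  have hχz_im := (Complex.abs_im_le_norm _).trans
    (norm_integral_inv_smul_chirp_mul_le hz hp hpq hα hm hB hω)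
  have hconj_im := (Complex.abs_im_le_norm _).trans
    (norm_integral_inv_smul_conj_chirp_mul_le hz hp hpq hα hm hB hω)
  rw [integral_chirpDamping_mul hz.continuousOn hp hpq]
  linear_combination a * neg_le_of_abs_le hz_re + r * neg_le_of_abs_le hχ_im +
    r / 2 * neg_le_of_abs_le hχz_im + r / 2 * le_of_abs_le hconj_im

/-- The exponent of the constant `Γ₄`, as a function of the initial time `p`. -/
noncomputable def fastOscillationExponent (a r α lam p : ℝ) : ℝ :=
  (2 * a * (a + r + 8) + 5 * r * (a + r + 4)) / (2 * lam * p) + 3 * r / (α * p ^ α) +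
    r * log 3 / (α - 1)

theorem le_fastOscillationExponent (hp : 0 < p) (ha : 0 ≤ a) (hr : 0 ≤ r) (hα : 1 < α)
    (hlam : 0 < lam) :
    (a + 3 / 2 * r) * ((2 + (a + r)) / (p * (2 * lam))) + 2 * r / (α * p ^ α) +
        r / 2 * ((1 + log 2) / (α - 1)) ≤ fastOscillationExponent a r α lam p := by
  have : 0 < α := by linarith
  have : 0 < α - 1 := sub_pos.2 hα
  have hlog : 1 + log 2 ≤ 2 * log 3 := by
    have h₁ : 1 ≤ log 3 := (le_log_iff_exp_le (by norm_num)).2 exp_one_lt_three.le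
    have h₂ : log 2 ≤ log 3 := log_le_log (by norm_num) (by norm_num)
    linarith
  rw [fastOscillationExponent]
  gcongr ?_ + ?_ + ?_
  · rw [mul_div_assoc', mul_comm p, mul_right_comm]
    gcongr
    nlinarith [mul_nonneg ha hr, sq_nonneg a, sq_nonneg r]
  · gcongr
    norm_num
  · calc r / 2 * ((1 + log 2) / (α - 1)) ≤ r / 2 * (2 * log 3 / (α - 1)) := by gcongr
      _ = r * log 3 / (α - 1) := by ring

end Chirp

namespace IsDampedFlowOn

variable {a r α lam p q : ℝ} {ψ : ℝ → ℂ}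

theorem log_norm_sq_le_of_chirpDamping (hψ : IsDampedFlowOn lam (chirpDamping a r α) ψ p q)
    (hp : 0 < p) (hpq : p ≤ q) (ha : 0 ≤ a) (hr : 0 ≤ r) (hα : 1 < α) (hlam : 0 < lam)
    (h0 : ∀ s ∈ Icc p q, ψ s ≠ 0) :
    log (‖ψ q‖ ^ 2) ≤
      fastOscillationExponent a r α lam p + log (‖ψ p‖ ^ 2) - a * log (q / p) := by
  have hb : ContinuousOn (chirpDamping a r α) (Icc p q) :=
    (continuousOn_chirpDamping hp).mono Icc_subset_Ici_self
  have hz := hψ.hasAngularVelocityOn_doubledPhase h0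
  have hlog := hψ.log_norm_sq_sub_log_norm_sq hpq hb h0
  have hvelocity : ∀ s ∈ Ioo p q,
      |2 * lam + chirpDamping a r α s * (doubledPhase ψ s).im - 2 * lam| ≤ (a + r) / s :=
    fun s hs ↦ calc
      _ = |chirpDamping a r α s| * |(doubledPhase ψ s).im| := by rw [add_sub_cancel_left, abs_mul]
      _ ≤ |chirpDamping a r α s| * 1 := by
        gcongr; exact hz.abs_im_le_one (Ioo_subset_Icc_self hs)
      _ ≤ (a + r) / s := by rw [mul_one]; exact abs_chirpDamping_le ha hr (hp.trans hs.1)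
  have hintegral := le_integral_chirpDamping_mul hz hp hpq ha hr hα (by positivity) hvelocity
  have hexponent := le_fastOscillationExponent hp ha hr hα hlam
  linarith

theorem norm_sq_le_of_chirpDamping (hψ : IsDampedFlowOn lam (chirpDamping a r α) ψ p q)
    (hp : 0 < p) (hpq : p ≤ q) (ha : 0 ≤ a) (hr : 0 ≤ r) (hα : 1 < α) (hlam : 0 < lam) :
    ‖ψ q‖ ^ 2 ≤ exp (fastOscillationExponent a r α lam p) * ‖ψ p‖ ^ 2 * (p / q) ^ a := by
  have hq : 0 < q := hp.trans_le hpq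
  by_cases hψq : ψ q = 0
  · rw [hψq, norm_zero, zero_pow two_ne_zero]
    positivity
  have h0 : ∀ s ∈ Icc p q, ψ s ≠ 0 := fun s hs ↦
    hψ.ne_zero_of_ne_zero_right ((continuousOn_chirpDamping hp).mono Icc_subset_Ici_self) hψq hs
  have hE : ∀ s ∈ Icc p q, 0 < ‖ψ s‖ ^ 2 := fun s hs ↦ by
    have := h0 s hs
    positivity
  have hEp := hE p (left_mem_Icc.2 hpq)
  refine (log_le_log_iff (hE q (right_mem_Icc.2 hpq)) (by positivity)).1 ?_
  rw [log_mul (by positivity) (by positivity), log_mul (exp_ne_zero _) hEp.ne', log_exp,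
    log_rpow (by positivity), ← inv_div q p, log_inv]
  linarith [hψ.log_norm_sq_le_of_chirpDamping hp hpq ha hr hα hlam h0]

end IsDampedFlowOn

theorem hyperbolic_regime_fast_oscillations_general
    (t0 a r α : ℝ) (ht0 : 0 < t0) (ha : 0 ≤ a) (hr0 : 0 ≤ r) (hα : 1 < α)
    (lam : ℝ) (hlam : 0 < lam)
    (u u' : ℝ → ℝ)
    (hu : IsDampedSol t0 (fun t => (a + r * Real.sin (t ^ α)) / t) lam u u') :
    ∀ t ≥ t0,
      u' t ^ 2 + lam ^ 2 * u t ^ 2 ≤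
        Real.exp ((2 * a * (a + r + 8) + 5 * r * (a + r + 4)) / (2 * lam * t0)
            + 3 * r / (α * t0 ^ α) + r * Real.log 3 / (α - 1)) *
          (u' t0 ^ 2 + lam ^ 2 * u t0 ^ 2) * (t0 / t) ^ a := by
  intro t ht
  rw [← norm_phasor_sq, ← norm_phasor_sq]
  have hψ : IsDampedFlowOn lam (chirpDamping a r α) (phasor lam u u') t0 t :=
    hu.isDampedFlowOn_phasor (continuousOn_chirpDamping ht0) t
  exact hψ.norm_sq_le_of_chirpDamping ht0 ht ha hr0 hα hlam

theorem hyperbolic_regime_fast_oscillations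
    (t0 a r α : ℝ) (ht0 : 0 < t0) (ha : 0 < a) (hr0 : 0 ≤ r) (hra : r ≤ a) (hα : 1 < α)
    (lam : ℝ) (hlam : 0 < lam)
    (u u' : ℝ → ℝ)
    (hu : IsDampedSol t0 (fun t => (a + r * Real.sin (t ^ α)) / t) lam u u') :
    ∀ t ≥ t0,
      u' t ^ 2 + lam ^ 2 * u t ^ 2 ≤
        Real.exp ((2 * a * (a + r + 8) + 5 * r * (a + r + 4)) / (2 * lam * t0)
            + 3 * r / (α * t0 ^ α) + r * Real.log 3 / (α - 1)) *
          (u' t0 ^ 2 + lam ^ 2 * u t0 ^ 2) * (t0 / t) ^ a :=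
  hyperbolic_regime_fast_oscillations_general t0 a r α ht0 ha.le hr0 hα lam hlam u u' hu
end

section
/- Let t0 > 0, let λ ≥ 0, and let b : [t0,∞) → ℝ be a measurable function such that m/t ≤ b(t) ≤ M/t for every t ≥ t0, where M ≥ m > 0 are real constants. Set μ := min{m, 2}. Then every solution u of the damped oscillator equation u'' + b(t)u' + λ²u = 0 satisfies u'(t)² + λ²u(t)² ≤ e^{m(M+8)}·{4u'(t0)² + (λ² + 2/t0²)u(t0)²}·(t0/t)^μ for every t ≥ t0. -/
open Real Set Filter MeasureTheory intervalIntegral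

/-!
In the variable `log x` the unknowns `z = u / x` and `v = u'` satisfy `z' = v - z`,
`v' = -β v - τ² z` with `τ = lam x` and `β = x b(x)` in `[m, M]`, and the claim says that
`x ^ μ (v² + τ² z²)` stays bounded. Each bound follows from a Lyapunov function which decreases
after multiplication by `x ^ μ` and by the exponential of a bounded correction.

While `τ ≤ 1 / 2` the oscillation term is a perturbation, absorbed by the correction `exp (-τ²)`.
The quadratic form `v² + τ² z² + (μ / 2) z²` then decays at every rate `μ ≤ 3 / 2`. As the full rate
`2` is out of its reach, for `μ ≥ 1` one uses that the norm `|z| + 2 |v|` decays at the rate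
`μ / 2` and squares.

Once `τ ≥ 1 / 2` the cross term `μ v z` transfers dissipation from `v` to `z`. What remains in the
derivative is at most `(M μ / 4) z²`, which is `O(τ⁻²)` relative to the energy, hence integrable in
`log x` and absorbed by `exp (M μ / (8 τ²))`. The two regimes are glued where `τ = 1 / 2`.
-/

section AbsoluteContinuity

variable {X Y : Type*} [PseudoMetricSpace X] [PseudoMetricSpace Y] {a b : ℝ}

lemma absolutelyContinuousOnInterval_of_eqOn {f g : ℝ → X}
    (hf : AbsolutelyContinuousOnInterval f a b) (hfg : EqOn f g (uIcc a b)) :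
    AbsolutelyContinuousOnInterval g a b := by
  refine Tendsto.congr' ?_ hf
  filter_upwards [mem_inf_of_right (mem_principal_self _)] with E hE
  exact Finset.sum_congr rfl fun i hi => by rw [hfg (hE.1 i hi).1, hfg (hE.1 i hi).2]

lemma absolutelyContinuousOnInterval_comp_lipschitzWith {K : NNReal} {g : X → Y} {f : ℝ → X}
    (hg : LipschitzWith K g) (hf : AbsolutelyContinuousOnInterval f a b) :
    AbsolutelyContinuousOnInterval (fun x => g (f x)) a b := by
  refine squeeze_zero (fun E => Finset.sum_nonneg fun i _ => dist_nonneg) (fun E => ?_)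
    (by simpa using Tendsto.const_mul (K : ℝ) hf)
  rw [Finset.mul_sum]
  exact Finset.sum_le_sum fun i _ => hg.dist_le_mul _ _

lemma antitoneOn_Icc_of_ae_deriv_nonpos {f : ℝ → ℝ} (hf : AbsolutelyContinuousOnInterval f a b)
    (hf' : ∀ᵐ x, x ∈ Icc a b → deriv f x ≤ 0) : AntitoneOn f (Icc a b) := by
  intro x hx y hy hxy
  have hsub : Icc x y ⊆ Icc a b := Icc_subset_Icc hx.1 hy.2
  have hint : ∫ s in x..y, deriv f s = f y - f x := by
    refine (hf.mono ?_).integral_deriv_eq_sub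
    rwa [uIcc_of_le hxy, uIcc_of_le (hx.1.trans hx.2)]
  have hneg : ∫ s in x..y, deriv f s ≤ 0 := by
    rw [intervalIntegral.integral_of_le hxy]
    refine setIntegral_nonpos_ae measurableSet_Ioc ?_
    filter_upwards [hf'] with s hs hsxy using hs (hsub (Ioc_subset_Icc_self hsxy))
  linarith

lemma antitoneOn_rpow_mul_exp_mul {F φ : ℝ → ℝ} {μ : ℝ} (ha : 0 < a)
    (hF : AbsolutelyContinuousOnInterval F a b) (hφ : ContDiffOn ℝ 1 φ (Ioi 0))
    (h : ∀ᵐ x, x ∈ Icc a b → ∃ F' φ',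
      HasDerivAt F (F' / x) x ∧ HasDerivAt φ (φ' / x) x ∧ F' + (μ + φ') * F x ≤ 0) :
    AntitoneOn (fun x => x ^ μ * exp (φ x) * F x) (Icc a b) := by
  rcases lt_or_ge b a with hba | hab
  · simpa only [Icc_eq_empty hba.not_ge] using subsingleton_empty.antitoneOn _
  have hpos : uIcc a b ⊆ Ioi 0 := fun x hx => ha.trans_le (uIcc_of_le hab ▸ hx).1
  have hrpow : ContDiffOn ℝ 1 (fun x : ℝ => x ^ μ) (Ioi 0) := fun x hx =>
    (contDiffAt_rpow_const_of_ne (ne_of_gt hx)).contDiffWithinAt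
  refine antitoneOn_Icc_of_ae_deriv_nonpos
    (((hrpow.mul hφ.exp).mono hpos).absolutelyContinuousOnInterval.fun_mul hF) ?_
  filter_upwards [h] with x hx hxab
  obtain ⟨F', φ', hF', hφ', hle⟩ := hx hxab
  have hx0 : 0 < x := ha.trans_le hxab.1
  have hweight := (Real.hasDerivAt_rpow_const (p := μ) (Or.inl hx0.ne')).fun_mul hφ'.exp
  have hderiv : deriv (fun x => x ^ μ * exp (φ x) * F x) x =
      x ^ μ * exp (φ x) / x * (F' + (μ + φ') * F x) := by
    rw [(hweight.fun_mul hF').deriv, rpow_sub_one hx0.ne']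
    field_simp
    ring
  rw [hderiv]
  exact mul_nonpos_of_nonneg_of_nonpos (by positivity) hle

end AbsoluteContinuity

lemma hasDerivAt_abs_of_differentiableAt {f : ℝ → ℝ} {f' x : ℝ} (hf : HasDerivAt f f' x)
    (habs : DifferentiableAt ℝ (fun y => |f y|) x) :
    HasDerivAt (fun y => |f y|) (SignType.sign (f x) * f') x := by
  rcases eq_or_ne (f x) 0 with hfx | hfx
  · have hmin : IsLocalMin (fun y => |f y|) x := .of_forall fun y => by simp [hfx]
    simpa [hfx, hmin.deriv_eq_zero] using habs.hasDerivAt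
  · exact (hasDerivAt_abs hfx).comp x hf

lemma sign_mul_le_abs (r s : ℝ) : SignType.sign r * s ≤ |s| := by
  obtain h | h | h := lt_trichotomy r 0 <;> simp [h, le_abs_self, neg_le_abs]

/-- The damped oscillator equation on `[a, b]` in the scale-invariant unknowns `z x = u x / x` and
`v = u'`, with damping coefficient `β x / x`. In the variable `log x` it becomes the system
`z' = v - z`, `v' = -β v - (lam x)² z`. -/
structure IsScaledSolOn (β : ℝ → ℝ) (lam a b : ℝ) (z v : ℝ → ℝ) : Prop where
  ac_fst : AbsolutelyContinuousOnInterval z a b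
  ac_snd : AbsolutelyContinuousOnInterval v a b
  ae_hasDerivAt : ∀ᵐ x, x ∈ Icc a b → HasDerivAt z ((v x - z x) / x) x ∧
    HasDerivAt v (-(β x * v x + (lam * x) ^ 2 * z x) / x) x

lemma IsDampedSol.isScaledSolOn {t0 lam t : ℝ} {b u u' : ℝ → ℝ} (ht0 : 0 < t0) (ht : t0 ≤ t)
    (hu : IsDampedSol t0 b lam u u') :
    IsScaledSolOn (fun x => x * b x) lam t0 t (fun x => u x / x) u' := by
  obtain ⟨hderiv, hcont, w, hw, hint, hode⟩ := hu
  have hIcc : uIcc t0 t = Icc t0 t := uIcc_of_le ht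
  refine ⟨?_, ?_, ?_⟩
  · have hu1 : ContDiffOn ℝ 1 u (Ici t0) :=
      (contDiffOn_one_iff_derivWithin (uniqueDiffOn_Ici t0)).2
        ⟨fun x hx => (hderiv x hx).differentiableAt.differentiableWithinAt,
          hcont.congr fun x hx =>
            (hderiv x hx).hasDerivWithinAt.derivWithin (uniqueDiffOn_Ici t0 x hx)⟩
    exact ((hu1.div contDiffOn_id fun x hx => (ht0.trans_le hx).ne').mono
      (hIcc ▸ Icc_subset_Ici_self)).absolutelyContinuousOnInterval
  · have hconst : AbsolutelyContinuousOnInterval (fun _ => u' t0) t0 t :=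
      contDiffOn_const.absolutelyContinuousOnInterval
    refine absolutelyContinuousOnInterval_of_eqOn (hconst.fun_add
      ((hw t ht).absolutelyContinuousOnInterval_intervalIntegral left_mem_uIcc)) fun x hx => ?_
    exact (hint x (hIcc ▸ hx).1).symm
  · rw [ae_restrict_iff' measurableSet_Ici] at hode
    filter_upwards [hode, (hw t ht).ae_hasDerivAt_integral, Measure.ae_ne volume t0]
      with x hodex hintx hne hx
    have hx0 : x ≠ 0 := (ht0.trans_le hx.1).ne'
    have hw_eq := hodex hx.1
    refine ⟨((hderiv x hx.1).div (hasDerivAt_id x) hx0).congr_deriv ?_, ?_⟩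
    · simp only [id]
      field_simp
    · have hu' : HasDerivAt u' (w x) x := by
        refine ((hintx (hIcc ▸ hx) t0 left_mem_uIcc).const_add (u' t0)).congr_of_eventuallyEq ?_
        filter_upwards [Ioi_mem_nhds (lt_of_le_of_ne hx.1 hne.symm)]
          with s hs using hint s (mem_Ici.2 (le_of_lt hs))
      refine hu'.congr_deriv ?_
      field_simp
      linarith

/-- The quantity `u'² + lam² u²` to be bounded, in the unknowns `z = u / x`, `v = u'`, with
`τ = lam x`. -/
def energy (τ z v : ℝ) : ℝ := v ^ 2 + τ ^ 2 * z ^ 2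

/-- The energy plus a multiple of `z²`, a Lyapunov function in the regime `τ ≤ 1 / 2`, where
`energy` does not control `z`. -/
noncomputable def augmentedEnergy (μ τ z v : ℝ) : ℝ := energy τ z v + μ / 2 * z ^ 2

/-- The augmented energy with a cross term `z v`, which spreads the dissipation over both unknowns
in the oscillating regime `1 / 2 ≤ τ`. -/
noncomputable def crossEnergy (μ τ z v : ℝ) : ℝ := augmentedEnergy μ τ z v + μ * (v * z)

/-- The quantity `4 u'² + (lam² + 2 / x²) u²` measuring the initial data, in the unknowns
`z = u / x`, `v = u'`. -/
def initialEnergy (τ z v : ℝ) : ℝ := 4 * v ^ 2 + (τ ^ 2 + 2) * z ^ 2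

section Energies

variable {μ τ z v : ℝ}

lemma energy_le_augmentedEnergy (hμ : 0 ≤ μ) : energy τ z v ≤ augmentedEnergy μ τ z v :=
  le_add_of_nonneg_right (by positivity)

lemma energy_nonneg : 0 ≤ energy τ z v := by
  unfold energy
  positivity

lemma initialEnergy_nonneg : 0 ≤ initialEnergy τ z v := by
  unfold initialEnergy
  positivity

lemma augmentedEnergy_nonneg (hμ : 0 ≤ μ) : 0 ≤ augmentedEnergy μ τ z v :=
  energy_nonneg.trans (energy_le_augmentedEnergy hμ)

lemma sq_mul_sq_le_crossEnergy (hμ0 : 0 ≤ μ) (hμ2 : μ ≤ 2) :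
    τ ^ 2 * z ^ 2 ≤ crossEnergy μ τ z v := by
  unfold crossEnergy augmentedEnergy energy
  nlinarith [sq_nonneg (v + μ / 2 * z),
    mul_nonneg (mul_nonneg hμ0 (sub_nonneg.2 hμ2)) (sq_nonneg z)]

lemma crossEnergy_le_augmentedEnergy (hμ : 0 ≤ μ) (hτ : 1 / 4 ≤ τ ^ 2) :
    crossEnergy μ τ z v ≤ (1 + μ) * augmentedEnergy μ τ z v := by
  have hcross : v * z ≤ v ^ 2 + τ ^ 2 * z ^ 2 := by
    nlinarith [sq_nonneg (v - z / 2), mul_le_mul_of_nonneg_right hτ (sq_nonneg z)]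
  have := mul_le_mul_of_nonneg_left hcross hμ
  unfold crossEnergy augmentedEnergy energy
  nlinarith [mul_nonneg (mul_nonneg hμ hμ) (sq_nonneg z)]

lemma energy_le_crossEnergy (hμ0 : 0 ≤ μ) (hμ2 : μ ≤ 2) (hτ : 1 / 4 ≤ τ ^ 2) :
    energy τ z v ≤ (1 + 3 * μ) * crossEnergy μ τ z v := by
  have hform : 0 ≤ 3 * v ^ 2 + (1 + 3 * μ) * (v * z) + (3 * τ ^ 2 + (1 + 3 * μ) / 2) * z ^ 2 := by
    nlinarith [sq_nonneg (6 * v + (1 + 3 * μ) * z), mul_le_mul_of_nonneg_right hτ (sq_nonneg z),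
      mul_nonneg (mul_nonneg hμ0 (sub_nonneg.2 hμ2)) (sq_nonneg z), sq_nonneg z]
  have := mul_nonneg hμ0 hform
  unfold crossEnergy augmentedEnergy energy
  linarith

lemma augmentedEnergy_le_initialEnergy (hμ : μ ≤ 2) :
    augmentedEnergy μ τ z v ≤ initialEnergy τ z v := by
  unfold augmentedEnergy energy initialEnergy
  nlinarith [sq_nonneg v, mul_le_mul_of_nonneg_right hμ (sq_nonneg z), sq_nonneg z]

lemma four_mul_augmentedEnergy_le_initialEnergy (hμ : μ ≤ 1) (hτ : τ ^ 2 ≤ 1 / 4) :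
    4 * augmentedEnergy μ τ z v ≤ 3 * initialEnergy τ z v := by
  unfold augmentedEnergy energy initialEnergy
  nlinarith [sq_nonneg v, mul_le_mul_of_nonneg_right hμ (sq_nonneg z),
    mul_le_mul_of_nonneg_right hτ (sq_nonneg z), sq_nonneg z]

lemma augmentedEnergy_le_mul_sq_abs_add (hμ : μ ≤ 2) (hτ : τ ^ 2 ≤ 1 / 4) :
    augmentedEnergy μ τ z v ≤ 5 / 4 * (|z| + 2 * |v|) ^ 2 := by
  unfold augmentedEnergy energy
  nlinarith [sq_abs z, sq_abs v, mul_nonneg (abs_nonneg z) (abs_nonneg v),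
    mul_le_mul_of_nonneg_right hμ (sq_nonneg z), mul_le_mul_of_nonneg_right hτ (sq_nonneg z)]

lemma sq_abs_add_le_initialEnergy : (|z| + 2 * |v|) ^ 2 ≤ 2 * initialEnergy τ z v := by
  unfold initialEnergy
  nlinarith [sq_abs z, sq_abs v, sq_nonneg (|z| - 2 * |v|), mul_nonneg (sq_nonneg τ) (sq_nonneg z)]

end Energies

namespace IsScaledSolOn

variable {β z v : ℝ → ℝ} {lam a b : ℝ}

lemma mono {c d : ℝ} (hs : IsScaledSolOn β lam a b z v) (hac : a ≤ c) (hcd : c ≤ d)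
    (hdb : d ≤ b) : IsScaledSolOn β lam c d z v where
  ac_fst := hs.ac_fst.mono (uIcc_subset_uIcc (mem_uIcc_of_le hac (hcd.trans hdb))
    (mem_uIcc_of_le (hac.trans hcd) hdb))
  ac_snd := hs.ac_snd.mono (uIcc_subset_uIcc (mem_uIcc_of_le hac (hcd.trans hdb))
    (mem_uIcc_of_le (hac.trans hcd) hdb))
  ae_hasDerivAt := by
    filter_upwards [hs.ae_hasDerivAt] with x hx hxcd using hx (Icc_subset_Icc hac hdb hxcd)

lemma ac_augmentedEnergy (hs : IsScaledSolOn β lam a b z v) (μ : ℝ) :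
    AbsolutelyContinuousOnInterval (fun x => augmentedEnergy μ (lam * x) (z x) (v x)) a b := by
  have hτ : AbsolutelyContinuousOnInterval (fun x => lam * x) a b :=
    (contDiffOn_const.mul contDiffOn_id).absolutelyContinuousOnInterval
  simpa only [augmentedEnergy, energy, pow_two] using
    ((hs.ac_snd.fun_mul hs.ac_snd).fun_add
      ((hτ.fun_mul hτ).fun_mul (hs.ac_fst.fun_mul hs.ac_fst))).fun_add
        ((hs.ac_fst.fun_mul hs.ac_fst).const_mul (μ / 2))

lemma ac_crossEnergy (hs : IsScaledSolOn β lam a b z v) (μ : ℝ) :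
    AbsolutelyContinuousOnInterval (fun x => crossEnergy μ (lam * x) (z x) (v x)) a b :=
  (hs.ac_augmentedEnergy μ).fun_add ((hs.ac_snd.fun_mul hs.ac_fst).const_mul μ)

end IsScaledSolOn

section Derivatives

variable {z v : ℝ → ℝ} {B lam x : ℝ}

lemma hasDerivAt_augmentedEnergy (hx : x ≠ 0) (hz : HasDerivAt z ((v x - z x) / x) x)
    (hv : HasDerivAt v (-(B * v x + (lam * x) ^ 2 * z x) / x) x) (μ : ℝ) :
    HasDerivAt (fun y => augmentedEnergy μ (lam * y) (z y) (v y))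
      ((-2 * B * v x ^ 2 + μ * z x * (v x - z x)) / x) x := by
  have hτ : HasDerivAt (fun y => lam * y) lam x := by simpa using (hasDerivAt_id x).const_mul lam
  refine (((hv.fun_pow 2).fun_add ((hτ.fun_pow 2).fun_mul (hz.fun_pow 2))).fun_add
    ((hz.fun_pow 2).const_mul (μ / 2))).congr_deriv ?_
  field_simp
  ring

lemma hasDerivAt_crossEnergy (hx : x ≠ 0) (hz : HasDerivAt z ((v x - z x) / x) x)
    (hv : HasDerivAt v (-(B * v x + (lam * x) ^ 2 * z x) / x) x) (μ : ℝ) :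
    HasDerivAt (fun y => crossEnergy μ (lam * y) (z y) (v y))
      (((μ - 2 * B) * v x ^ 2 - μ * B * (v x * z x) - μ * (lam * x) ^ 2 * z x ^ 2
        - μ * z x ^ 2) / x) x := by
  refine ((hasDerivAt_augmentedEnergy hx hz hv μ).fun_add
    ((hv.fun_mul hz).const_mul μ)).congr_deriv ?_
  field_simp
  ring

lemma hasDerivAt_neg_sq_mul (lam x : ℝ) :
    HasDerivAt (fun y => -(lam * y) ^ 2) (-2 * (lam * x) ^ 2 / x) x := by
  refine ((((hasDerivAt_id x).const_mul lam).fun_pow 2).fun_neg).congr_deriv ?_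
  simp only [id]
  field_simp
  ring

lemma hasDerivAt_div_sq_mul (hlam : lam ≠ 0) (hx : x ≠ 0) (c : ℝ) :
    HasDerivAt (fun y => c / (lam * y) ^ 2) (-2 * c / (lam * x) ^ 2 / x) x := by
  refine ((hasDerivAt_const x c).fun_div (((hasDerivAt_id x).const_mul lam).fun_pow 2)
    (pow_ne_zero 2 (mul_ne_zero hlam hx))).congr_deriv ?_
  simp only [id]
  field_simp
  ring

end Derivatives

namespace IsScaledSolOn

variable {β z v : ℝ → ℝ} {lam a b m μ M : ℝ}

lemma antitoneOn_augmentedEnergy (hs : IsScaledSolOn β lam a b z v) (ha : 0 < a) (hμ0 : 0 ≤ μ)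
    (hμ : μ ≤ 3 / 2) (hβ : ∀ x ∈ Icc a b, μ ≤ β x) :
    AntitoneOn (fun x => x ^ μ * exp (-(lam * x) ^ 2) *
      augmentedEnergy μ (lam * x) (z x) (v x)) (Icc a b) := by
  refine antitoneOn_rpow_mul_exp_mul ha (hs.ac_augmentedEnergy μ) (by fun_prop) ?_
  filter_upwards [hs.ae_hasDerivAt] with x hx hxab
  obtain ⟨hz, hv⟩ := hx hxab
  refine ⟨_, _, hasDerivAt_augmentedEnergy (ha.trans_le hxab.1).ne' hz hv μ,
    hasDerivAt_neg_sq_mul lam x, ?_⟩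
  unfold augmentedEnergy energy
  have hdamp := mul_nonneg (sub_nonneg.2 (hβ x hxab)) (sq_nonneg (v x))
  have hsq := mul_nonneg hμ0 (sq_nonneg (v x - z x / 2))
  have hμz := mul_nonneg (mul_nonneg hμ0 (sub_nonneg.2 hμ)) (sq_nonneg (z x))
  have hτv := mul_nonneg (sq_nonneg (lam * x)) (sq_nonneg (v x))
  have hτz := mul_nonneg (sq_nonneg ((lam * x) ^ 2)) (sq_nonneg (z x))
  nlinarith

lemma antitoneOn_abs_add_two_mul_abs (hs : IsScaledSolOn β lam a b z v) (ha : 0 < a)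
    (hμ : μ ≤ 1) (hβ : ∀ x ∈ Icc a b, μ + 1 / 2 ≤ β x) :
    AntitoneOn (fun x => x ^ μ * exp (-(lam * x) ^ 2) * (|z x| + 2 * |v x|)) (Icc a b) := by
  have hacz := absolutelyContinuousOnInterval_comp_lipschitzWith lipschitzWith_one_norm hs.ac_fst
  have hacv := absolutelyContinuousOnInterval_comp_lipschitzWith lipschitzWith_one_norm hs.ac_snd
  simp only [Real.norm_eq_abs] at hacz hacv
  refine antitoneOn_rpow_mul_exp_mul ha (hacz.fun_add (hacv.const_mul 2)) (by fun_prop) ?_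
  filter_upwards [hs.ae_hasDerivAt, hacz.ae_differentiableAt, hacv.ae_differentiableAt]
    with x hx hdz hdv hxab
  obtain ⟨hz, hv⟩ := hx hxab
  have hxab' := Icc_subset_uIcc hxab
  have hx0 : x ≠ 0 := (ha.trans_le hxab.1).ne'
  refine ⟨SignType.sign (z x) * (v x - z x) +
      2 * (SignType.sign (v x) * -(β x * v x + (lam * x) ^ 2 * z x)), _, ?_,
    hasDerivAt_neg_sq_mul lam x, ?_⟩
  · refine ((hasDerivAt_abs_of_differentiableAt hz (hdz hxab')).fun_add
      ((hasDerivAt_abs_of_differentiableAt hv (hdv hxab')).const_mul 2)).congr_deriv ?_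
    field_simp
  have hsignz := sign_mul_le_abs (z x) (v x)
  have hsignv := mul_le_mul_of_nonneg_left (sign_mul_le_abs (v x) (-z x)) (sq_nonneg (lam * x))
  rw [abs_neg] at hsignv
  have hdampz := mul_nonneg (sub_nonneg.2 hμ) (abs_nonneg (z x))
  have hdampv := mul_nonneg (sub_nonneg.2 (hβ x hxab)) (abs_nonneg (v x))
  have hτv := mul_nonneg (sq_nonneg (lam * x)) (abs_nonneg (v x))
  linear_combination hsignz + 2 * hsignv + hdampz + 2 * hdampv + 4 * hτv
    - sign_mul_self (z x) - 2 * β x * sign_mul_self (v x)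

lemma antitoneOn_crossEnergy (hs : IsScaledSolOn β lam a b z v) (ha : 0 < a) (hlam : lam ≠ 0)
    (hμ0 : 0 ≤ μ) (hμ2 : μ ≤ 2) (hβ : ∀ x ∈ Icc a b, μ ≤ β x ∧ β x ≤ M) :
    AntitoneOn (fun x => x ^ μ * exp (M * μ / 8 / (lam * x) ^ 2) *
      crossEnergy μ (lam * x) (z x) (v x)) (Icc a b) := by
  have hφ : ContDiffOn ℝ 1 (fun x : ℝ => M * μ / 8 / (lam * x) ^ 2) (Ioi 0) :=
    contDiffOn_const.div (by fun_prop) fun x hx => pow_ne_zero 2 (mul_ne_zero hlam (ne_of_gt hx))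
  refine antitoneOn_rpow_mul_exp_mul ha (hs.ac_crossEnergy μ) hφ ?_
  filter_upwards [hs.ae_hasDerivAt] with x hx hxab
  obtain ⟨hz, hv⟩ := hx hxab
  have hx0 : x ≠ 0 := (ha.trans_le hxab.1).ne'
  have hτ : 0 < (lam * x) ^ 2 := by positivity
  refine ⟨_, _, hasDerivAt_crossEnergy hx0 hz hv μ, hasDerivAt_div_sq_mul hlam hx0 _, ?_⟩
  obtain ⟨hμβ, hβM⟩ := hβ x hxab
  have hcross : M * μ / 4 * z x ^ 2 ≤
      M * μ / 4 / (lam * x) ^ 2 * crossEnergy μ (lam * x) (z x) (v x) := by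
    rw [div_mul_eq_mul_div _ ((lam * x) ^ 2), le_div_iff₀ hτ]
    have := mul_le_mul_of_nonneg_left (sq_mul_sq_le_crossEnergy (τ := lam * x) (z := z x)
      (v := v x) hμ0 hμ2) (show 0 ≤ M * μ / 4 by nlinarith)
    linarith
  have hφ' : -2 * (M * μ / 8) / (lam * x) ^ 2 = -(M * μ / 4 / (lam * x) ^ 2) := by ring
  have hsq := mul_nonneg (sub_nonneg.2 hμβ) (sq_nonneg (v x + μ * z x / 4))
  have hμz := mul_nonneg (mul_nonneg hμ0 (sub_nonneg.2 hμ2)) (sq_nonneg (z x))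
  have hdrift : (μ - 2 * β x) * v x ^ 2 - μ * β x * (v x * z x) - μ * (lam * x) ^ 2 * z x ^ 2
      - μ * z x ^ 2 + μ * crossEnergy μ (lam * x) (z x) (v x) ≤ M * μ / 4 * z x ^ 2 := by
    have hcoeff : (β x - μ) * μ ^ 2 / 8 ≤ M * μ / 4 := by
      nlinarith [mul_nonneg hμ0 hμ0, mul_nonneg hμ0 (sub_nonneg.2 hβM),
        mul_nonneg (mul_nonneg hμ0 (sub_nonneg.2 hμβ)) (sub_nonneg.2 hμ2)]
    have := mul_le_mul_of_nonneg_right hcoeff (sq_nonneg (z x))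
    unfold crossEnergy augmentedEnergy energy
    linarith
  rw [hφ', add_mul, neg_mul]
  linarith

lemma rpow_mul_augmentedEnergy_le_of_le_one (hs : IsScaledSolOn β lam a b z v) (ha : 0 < a)
    (hab : a ≤ b) (hμ0 : 0 ≤ μ) (hμ1 : μ ≤ 1) (hβ : ∀ x ∈ Icc a b, μ ≤ β x)
    (hτb : (lam * b) ^ 2 ≤ 1 / 4) :
    b ^ μ * augmentedEnergy μ (lam * b) (z b) (v b) ≤
      a ^ μ * initialEnergy (lam * a) (z a) (v a) := by
  have hb : 0 < b := ha.trans_le hab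
  have hτa : (lam * a) ^ 2 ≤ 1 / 4 := by
    rw [mul_pow] at hτb ⊢
    exact le_trans (by gcongr) hτb
  have hmono : b ^ μ * exp (-(lam * b) ^ 2) * augmentedEnergy μ (lam * b) (z b) (v b) ≤
      a ^ μ * exp (-(lam * a) ^ 2) * augmentedEnergy μ (lam * a) (z a) (v a) :=
    hs.antitoneOn_augmentedEnergy ha hμ0 (by linarith) hβ (left_mem_Icc.2 hab)
      (right_mem_Icc.2 hab) hab
  have hexpb : 3 / 4 ≤ exp (-(lam * b) ^ 2) := by linarith [add_one_le_exp (-(lam * b) ^ 2)]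
  have hexpa : exp (-(lam * a) ^ 2) ≤ 1 := exp_le_one_iff.2 (neg_nonpos.2 (sq_nonneg _))
  have hEb : 0 ≤ b ^ μ * augmentedEnergy μ (lam * b) (z b) (v b) :=
    mul_nonneg (by positivity) (augmentedEnergy_nonneg hμ0)
  have hEa : 0 ≤ a ^ μ * augmentedEnergy μ (lam * a) (z a) (v a) :=
    mul_nonneg (by positivity) (augmentedEnergy_nonneg hμ0)
  have hinit := mul_le_mul_of_nonneg_left
    (four_mul_augmentedEnergy_le_initialEnergy (z := z a) (v := v a) hμ1 hτa)
    (rpow_nonneg ha.le μ)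
  nlinarith [mul_le_mul_of_nonneg_right hexpb hEb, mul_le_mul_of_nonneg_right hexpa hEa]

lemma rpow_mul_augmentedEnergy_le_of_one_le (hs : IsScaledSolOn β lam a b z v) (ha : 0 < a)
    (hab : a ≤ b) (hμ1 : 1 ≤ μ) (hμ2 : μ ≤ 2) (hβ : ∀ x ∈ Icc a b, μ ≤ β x)
    (hτb : (lam * b) ^ 2 ≤ 1 / 4) :
    b ^ μ * augmentedEnergy μ (lam * b) (z b) (v b) ≤
      5 * (a ^ μ * initialEnergy (lam * a) (z a) (v a)) := by
  have hb : 0 < b := ha.trans_le hab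
  set Sa := |z a| + 2 * |v a|
  set Sb := |z b| + 2 * |v b|
  have hmono : b ^ (μ / 2) * exp (-(lam * b) ^ 2) * Sb ≤
      a ^ (μ / 2) * exp (-(lam * a) ^ 2) * Sa :=
    hs.antitoneOn_abs_add_two_mul_abs ha (by linarith) (fun x hx => by linarith [hβ x hx])
      (left_mem_Icc.2 hab) (right_mem_Icc.2 hab) hab
  have hexpa : exp (-(lam * a) ^ 2) ≤ 1 := exp_le_one_iff.2 (neg_nonpos.2 (sq_nonneg _))
  have hSbound : b ^ (μ / 2) * exp (-(lam * b) ^ 2) * Sb ≤ a ^ (μ / 2) * Sa :=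
    hmono.trans (by gcongr; exact mul_le_of_le_one_right (by positivity) hexpa)
  have hrpow {x : ℝ} (hx : 0 < x) : (x ^ (μ / 2)) ^ 2 = x ^ μ := by
    rw [← rpow_mul_natCast hx.le]; norm_num
  have hsq : b ^ μ * exp (-(lam * b) ^ 2) ^ 2 * Sb ^ 2 ≤ a ^ μ * Sa ^ 2 := by
    simpa only [mul_pow, hrpow hb, hrpow ha] using
      pow_le_pow_left₀ (by positivity) hSbound 2
  have hexpb : 1 / 2 ≤ exp (-(lam * b) ^ 2) ^ 2 := by
    rw [← exp_nat_mul]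
    have := add_one_le_exp ((2 : ℕ) * -(lam * b) ^ 2)
    push_cast at this ⊢
    linarith
  have hSb_sq : b ^ μ * Sb ^ 2 ≤ 2 * (a ^ μ * Sa ^ 2) := by
    nlinarith [mul_le_mul_of_nonneg_right hexpb (show 0 ≤ b ^ μ * Sb ^ 2 by positivity)]
  have hEb := mul_le_mul_of_nonneg_left
    (augmentedEnergy_le_mul_sq_abs_add (z := z b) (v := v b) hμ2 hτb) (rpow_nonneg hb.le μ)
  have hEa := mul_le_mul_of_nonneg_left
    (sq_abs_add_le_initialEnergy (τ := lam * a) (z := z a) (v := v a)) (rpow_nonneg ha.le μ)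
  linarith

lemma rpow_mul_augmentedEnergy_le (hs : IsScaledSolOn β lam a b z v) (ha : 0 < a) (hab : a ≤ b)
    (hm : 0 ≤ m) (hβ : ∀ x ∈ Icc a b, m ≤ β x) (hτb : (lam * b) ^ 2 ≤ 1 / 4) :
    b ^ min m 2 * augmentedEnergy (min m 2) (lam * b) (z b) (v b) ≤
      exp (4 * m) * (a ^ min m 2 * initialEnergy (lam * a) (z a) (v a)) := by
  have hβ' : ∀ x ∈ Icc a b, min m 2 ≤ β x := fun x hx => (min_le_left _ _).trans (hβ x hx)
  have hinit : 0 ≤ a ^ min m 2 * initialEnergy (lam * a) (z a) (v a) :=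
    mul_nonneg (by positivity) initialEnergy_nonneg
  rcases le_total m 1 with hm1 | hm1
  · exact (hs.rpow_mul_augmentedEnergy_le_of_le_one ha hab (le_min hm zero_le_two)
      ((min_le_left _ _).trans hm1) hβ' hτb).trans
      (le_mul_of_one_le_left hinit (one_le_exp (by linarith)))
  · refine (hs.rpow_mul_augmentedEnergy_le_of_one_le ha hab (le_min hm1 one_le_two)
      (min_le_right _ _) hβ' hτb).trans (mul_le_mul_of_nonneg_right ?_ hinit)
    linarith [add_one_le_exp (4 * m)]

lemma rpow_mul_energy_le_augmentedEnergy (hs : IsScaledSolOn β lam a b z v) (ha : 0 < a)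
    (hab : a ≤ b) (hμ0 : 0 ≤ μ) (hμ2 : μ ≤ 2) (hβ : ∀ x ∈ Icc a b, μ ≤ β x ∧ β x ≤ M)
    (hτa : 1 / 4 ≤ (lam * a) ^ 2) :
    b ^ μ * energy (lam * b) (z b) (v b) ≤
      exp (M * μ / 2 + 4 * μ) * (a ^ μ * augmentedEnergy μ (lam * a) (z a) (v a)) := by
  have hb : 0 < b := ha.trans_le hab
  have hlam : lam ≠ 0 := by rintro rfl; norm_num at hτa
  have hτb : 1 / 4 ≤ (lam * b) ^ 2 := by
    rw [mul_pow] at hτa ⊢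
    exact hτa.trans (by gcongr)
  have hMμ : 0 ≤ M * μ := by nlinarith [hβ a (left_mem_Icc.2 hab)]
  have hcross_nonneg (τ z v : ℝ) : 0 ≤ crossEnergy μ τ z v :=
    (by positivity : (0 : ℝ) ≤ τ ^ 2 * z ^ 2).trans (sq_mul_sq_le_crossEnergy hμ0 hμ2)
  have hexpa : exp (M * μ / 8 / (lam * a) ^ 2) ≤ exp (M * μ / 2) := by
    rw [exp_le_exp, div_le_iff₀ (by positivity)]
    nlinarith
  have hexpb : 1 ≤ exp (M * μ / 8 / (lam * b) ^ 2) := one_le_exp (by positivity)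
  have hexp : (1 + 3 * μ) * exp (M * μ / 2) * (1 + μ) ≤ exp (M * μ / 2 + 4 * μ) := by
    rw [show M * μ / 2 + 4 * μ = 3 * μ + M * μ / 2 + μ by ring, exp_add, exp_add]
    gcongr <;> linarith [add_one_le_exp (3 * μ), add_one_le_exp μ]
  calc b ^ μ * energy (lam * b) (z b) (v b)
    _ ≤ b ^ μ * ((1 + 3 * μ) * crossEnergy μ (lam * b) (z b) (v b)) := by
      gcongr
      exact energy_le_crossEnergy hμ0 hμ2 hτb
    _ ≤ (1 + 3 * μ) * (b ^ μ * exp (M * μ / 8 / (lam * b) ^ 2) *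
          crossEnergy μ (lam * b) (z b) (v b)) := by
      rw [mul_left_comm]
      gcongr
      · exact hcross_nonneg _ _ _
      · exact le_mul_of_one_le_right (by positivity) hexpb
    _ ≤ (1 + 3 * μ) * (a ^ μ * exp (M * μ / 8 / (lam * a) ^ 2) *
          crossEnergy μ (lam * a) (z a) (v a)) := by
      gcongr ?_ * ?_
      exact hs.antitoneOn_crossEnergy ha hlam hμ0 hμ2 hβ (left_mem_Icc.2 hab)
        (right_mem_Icc.2 hab) hab
    _ ≤ (1 + 3 * μ) * (a ^ μ * exp (M * μ / 2) *
          ((1 + μ) * augmentedEnergy μ (lam * a) (z a) (v a))) := by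
      gcongr
      · exact hcross_nonneg _ _ _
      · exact crossEnergy_le_augmentedEnergy hμ0 hτa
    _ = (1 + 3 * μ) * exp (M * μ / 2) * (1 + μ) *
          (a ^ μ * augmentedEnergy μ (lam * a) (z a) (v a)) := by ring
    _ ≤ _ := by
      gcongr
      exact mul_nonneg (by positivity) (augmentedEnergy_nonneg hμ0)

lemma exists_rpow_mul_augmentedEnergy_le (hs : IsScaledSolOn β lam a b z v) (ha : 0 < a)
    (hab : a ≤ b) (hm : 0 ≤ m) (hβ : ∀ x ∈ Icc a b, m ≤ β x) (hτb : 1 / 4 ≤ (lam * b) ^ 2) :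
    ∃ c ∈ Icc a b, 1 / 4 ≤ (lam * c) ^ 2 ∧
      c ^ min m 2 * augmentedEnergy (min m 2) (lam * c) (z c) (v c) ≤
        exp (4 * m) * (a ^ min m 2 * initialEnergy (lam * a) (z a) (v a)) := by
  rcases le_total (1 / 4) ((lam * a) ^ 2) with hτa | hτa
  · refine ⟨a, left_mem_Icc.2 hab, hτa, ?_⟩
    have hinit : 0 ≤ a ^ min m 2 * initialEnergy (lam * a) (z a) (v a) :=
      mul_nonneg (by positivity) initialEnergy_nonneg
    exact (mul_le_mul_of_nonneg_left (augmentedEnergy_le_initialEnergy (min_le_right _ _))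
      (by positivity)).trans (le_mul_of_one_le_left hinit (one_le_exp (by positivity)))
  · have hcont : ContinuousOn (fun x => (lam * x) ^ 2) (Icc a b) := by fun_prop
    obtain ⟨c, hc, hτc⟩ := intermediate_value_Icc hab hcont ⟨hτa, hτb⟩
    exact ⟨c, hc, hτc.ge, (hs.mono le_rfl hc.1 hc.2).rpow_mul_augmentedEnergy_le ha hc.1 hm
      (fun x hx => hβ x (Icc_subset_Icc_right hc.2 hx)) hτc.le⟩

lemma rpow_mul_energy_le (hs : IsScaledSolOn β lam a b z v) (ha : 0 < a) (hab : a ≤ b)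
    (hm : 0 ≤ m) (hβ : ∀ x ∈ Icc a b, m ≤ β x ∧ β x ≤ M) :
    b ^ min m 2 * energy (lam * b) (z b) (v b) ≤
      exp (m * (M + 8)) * (a ^ min m 2 * initialEnergy (lam * a) (z a) (v a)) := by
  have hμm : min m 2 ≤ m := min_le_left _ _
  have hμ0 : 0 ≤ min m 2 := le_min hm zero_le_two
  have hb : 0 < b := ha.trans_le hab
  have hM : 0 ≤ M := by linarith [hβ a (left_mem_Icc.2 hab)]
  have hMm : 0 ≤ M * m := mul_nonneg hM hm
  have hinit : 0 ≤ a ^ min m 2 * initialEnergy (lam * a) (z a) (v a) :=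
    mul_nonneg (by positivity) initialEnergy_nonneg
  rcases le_total ((lam * b) ^ 2) (1 / 4) with hτb | hτb
  · calc b ^ min m 2 * energy (lam * b) (z b) (v b)
      _ ≤ b ^ min m 2 * augmentedEnergy (min m 2) (lam * b) (z b) (v b) :=
        mul_le_mul_of_nonneg_left (energy_le_augmentedEnergy hμ0) (by positivity)
      _ ≤ exp (4 * m) * (a ^ min m 2 * initialEnergy (lam * a) (z a) (v a)) :=
        hs.rpow_mul_augmentedEnergy_le ha hab hm (fun x hx => (hβ x hx).1) hτb
      _ ≤ _ := mul_le_mul_of_nonneg_right (exp_le_exp.2 (by linarith)) hinit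
  · obtain ⟨c, hc, hτc, hEc⟩ :=
      hs.exists_rpow_mul_augmentedEnergy_le ha hab hm (fun x hx => (hβ x hx).1) hτb
    calc b ^ min m 2 * energy (lam * b) (z b) (v b)
      _ ≤ exp (M * min m 2 / 2 + 4 * min m 2) *
            (c ^ min m 2 * augmentedEnergy (min m 2) (lam * c) (z c) (v c)) :=
        (hs.mono hc.1 hc.2 le_rfl).rpow_mul_energy_le_augmentedEnergy (ha.trans_le hc.1) hc.2 hμ0
          (min_le_right _ _)
          (fun x hx => (hβ x (Icc_subset_Icc_left hc.1 hx)).imp_left hμm.trans) hτc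
      _ ≤ exp (M * min m 2 / 2 + 4 * min m 2) *
            (exp (4 * m) * (a ^ min m 2 * initialEnergy (lam * a) (z a) (v a))) := by
        gcongr
      _ = exp (M * min m 2 / 2 + 4 * min m 2 + 4 * m) *
            (a ^ min m 2 * initialEnergy (lam * a) (z a) (v a)) := by
        rw [exp_add _ (4 * m), mul_assoc]
      _ ≤ _ := mul_le_mul_of_nonneg_right
        (exp_le_exp.2 (by linarith [mul_le_mul_of_nonneg_left hμm hM])) hinit

end IsScaledSolOn

theorem decay_general_oscillations_ODE
    (t0 m M lam : ℝ) (ht0 : 0 < t0) (hm : 0 < m) (hmM : m ≤ M) (hlam : 0 ≤ lam)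
    (b : ℝ → ℝ) (hbmeas : Measurable b)
    (hb : ∀ t ≥ t0, m / t ≤ b t ∧ b t ≤ M / t)
    (u u' : ℝ → ℝ) (hu : IsDampedSol t0 b lam u u') :
    ∀ t ≥ t0,
      u' t ^ 2 + lam ^ 2 * u t ^ 2 ≤
        Real.exp (m * (M + 8)) *
          (4 * u' t0 ^ 2 + (lam ^ 2 + 2 / t0 ^ 2) * u t0 ^ 2) *
          (t0 / t) ^ (min m 2) := by
  intro t ht
  have ht_pos : 0 < t := ht0.trans_le ht
  have hβ : ∀ x ∈ Icc t0 t, m ≤ x * b x ∧ x * b x ≤ M := by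
    intro x hx
    have hx0 : 0 < x := ht0.trans_le hx.1
    exact (hb x hx.1).imp (div_le_iff₀' hx0).1 (le_div_iff₀' hx0).1
  have henergy : u' t ^ 2 + lam ^ 2 * u t ^ 2 = energy (lam * t) (u t / t) (u' t) := by
    unfold energy
    field_simp
  have hinit : 4 * u' t0 ^ 2 + (lam ^ 2 + 2 / t0 ^ 2) * u t0 ^ 2 =
      initialEnergy (lam * t0) (u t0 / t0) (u' t0) := by
    unfold initialEnergy
    field_simp
  rw [henergy, hinit, div_rpow ht0.le ht_pos.le, mul_div_assoc', le_div_iff₀' (by positivity),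
    mul_assoc, mul_comm (initialEnergy _ _ _)]
  exact (hu.isScaledSolOn ht0 ht).rpow_mul_energy_le ht0 ht hm.le hβ
end
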